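/- Let 𝔾 be a discrete quantum group of Kac type with tracial dual Haar state φ̂, let E be a conditional expectation of B(L²(𝔾)) onto L∞(𝔾̂), and set m := φ̂ ∘ E|_{L∞(𝔾)}. Then for every x ∈ L∞(𝔾) and all â, b̂ ∈ L∞(𝔾̂), taking ω := ω_{Λ_{φ̂}(â), Λ_{φ̂}(b̂)}, one has m((ω⊗id)Δ(x)) = (φ̂⊗φ̂)(Δ̂(b̂*)(E(x)⊗1)Δ̂(â)) = φ̂(E(x)) φ̂(â b̂*) = ω(1) m(x). -/

import Mathlib

/-!
Common framework: an axiomatization of locally compact quantum groups (in the von Neumann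
algebraic setting of Kustermans–Vaes) acting on a Hilbert space `H = L²(𝔾)`.

Since completed Hilbert space tensor products are not available, the tensor square
`H2 = L²(𝔾) ⊗ L²(𝔾)` is axiomatized: a Hilbert space together with a bilinear map
`tmul` with total range satisfying `⟪a ⊗ b, c ⊗ d⟫ = ⟪a, c⟫⟪b, d⟫`, the induced tensor
product of operators `tensorOp`, tensor products `funcTensor` of normal functionals,
and the slice maps `sliceL = ω ⊗ id`, `sliceR = id ⊗ ω`.

Normal functionals (elements of the predual `B(H)_*`) are characterized concretely:
`ω(x) = ∑ ⟪ηₙ, x ξₙ⟫` with `∑‖ξₙ‖² , ∑‖ηₙ‖² < ∞`.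

Membership of an operator `X` on `H2` in a spatial tensor product `P ⊗̄ Q` of von Neumann
algebras is encoded, via the commutation theorem, as: `X` commutes with all `a' ⊗ b'`
with `a' ∈ P'`, `b' ∈ Q'`.

A locally compact quantum group is recorded through its left regular co-representation
`W ∈ L∞(𝔾) ⊗̄ L∞(𝔾̂)` and right regular co-representation `V ∈ L∞(𝔾̂)' ⊗̄ L∞(𝔾)`,
which implement the co-multiplication: `Δ(x) = W*(1 ⊗ x)W = V(x ⊗ 1)V*` for `x ∈ L∞(𝔾)`;
`Δ̄(x) := W*(1 ⊗ x)W` for arbitrary `x ∈ B(H)` is the canonical normal extension of `Δ`.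
-/

noncomputable section

open scoped ComplexOrder ComplexInnerProductSpace

namespace LCQGNote

/-- The bounded operators `B(H)`. -/
abbrev B (H : Type*) [NormedAddCommGroup H] [InnerProductSpace ℂ H] : Type _ := H →L[ℂ] H

variable (H H2 : Type*)
  [NormedAddCommGroup H] [InnerProductSpace ℂ H] [CompleteSpace H]
  [NormedAddCommGroup H2] [InnerProductSpace ℂ H2] [CompleteSpace H2]

/-- The vector functional `ω_{ξ,η} : x ↦ ⟨x ξ, η⟩` on `B(H)` (written here in the
Mathlib convention for inner products, which are conjugate-linear in the first slot). -/
def vecFunctional (ξ η : H) : B H →ₗ[ℂ] ℂ where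
  toFun x := ⟪η, x ξ⟫
  map_add' x y := by simp [inner_add_right]
  map_smul' c x := by simp [inner_smul_right]

/-- A functional on `B(H)` is normal (σ-weakly continuous, i.e. belongs to the predual
`B(H)_*`) iff it has the form `x ↦ ∑ ⟪ηₙ, x ξₙ⟫` with `(ξₙ), (ηₙ)` square-summable. -/
def IsNormalFunctional (ω : B H →ₗ[ℂ] ℂ) : Prop :=
  ∃ ξ η : ℕ → H, Summable (fun n => ‖ξ n‖ ^ 2) ∧ Summable (fun n => ‖η n‖ ^ 2) ∧
    ∀ x : B H, HasSum (fun n => ⟪η n, x (ξ n)⟫) (ω x)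

/-- `φ` is a state of the von Neumann algebra `N ⊆ B(H)`: it is unital and positive on `N`.
(Functionals on `N` are encoded as functionals on `B(H)`; only the restriction to `N`
matters, by the Hahn–Banach extension theorem.) -/
def IsStateOn (N : VonNeumannAlgebra H) (φ : B H →ₗ[ℂ] ℂ) : Prop :=
  φ 1 = 1 ∧ ∀ x : B H, x ∈ N → x.IsPositive → 0 ≤ φ x

/-- A conditional expectation of `B(H)` onto a von Neumann subalgebra `N`:
a unital positive projection `E : B(H) → B(H)` with range `N`. -/
structure IsConditionalExpectation (N : VonNeumannAlgebra H) (E : B H →ₗ[ℂ] B H) : Prop where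
  unital : E 1 = 1
  positive : ∀ x : B H, x.IsPositive → (E x).IsPositive
  mem_range : ∀ x : B H, E x ∈ N
  fixes : ∀ x ∈ N, E x = x

/-- The center of a von Neumann algebra `N`: elements of `N` commuting with all of `N`. -/
def center (N : VonNeumannAlgebra H) : Set (B H) := {z | z ∈ N ∧ ∀ y ∈ N, z * y = y * z}

/-- A von Neumann algebra `N ⊆ B(H)` is injective if there is a conditional expectation
of `B(H)` onto `N`. -/
def IsInjectiveVNA (N : VonNeumannAlgebra H) : Prop :=
  ∃ E : B H →ₗ[ℂ] B H, IsConditionalExpectation H N E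

/-- A locally compact quantum group `𝔾`, axiomatized over its Hilbert space `H = L²(𝔾)`
together with the tensor square `H2 = L²(𝔾) ⊗ L²(𝔾)`.  `M = L∞(𝔾)`, `Mhat = L∞(𝔾̂)`
(both acting canonically on `L²(𝔾)`). -/
structure LCQG where
  /-- `L∞(𝔾)` -/
  M : VonNeumannAlgebra H
  /-- `L∞(𝔾̂)`, the dual von Neumann algebra, also acting on `L²(𝔾)` -/
  Mhat : VonNeumannAlgebra H
  /-- the tensor map `H × H → H2 = H ⊗ H` -/
  tmul : H →ₗ[ℂ] H →ₗ[ℂ] H2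
  tmul_inner : ∀ a b c d : H, ⟪tmul a b, tmul c d⟫ = ⟪a, c⟫ * ⟪b, d⟫
  tmul_total : (Submodule.span ℂ {v : H2 | ∃ a b, v = tmul a b}).topologicalClosure = ⊤
  /-- the tensor product of operators: `tensorOp x y = x ⊗ y` on `H2` -/
  tensorOp : B H →ₗ[ℂ] B H →ₗ[ℂ] B H2
  tensorOp_apply : ∀ (x y : B H) (a b : H), tensorOp x y (tmul a b) = tmul (x a) (y b)
  /-- the flip (tensor swap) unitary `Σ` on `H2` -/
  flipU : B H2
  flipU_apply : ∀ a b : H, flipU (tmul a b) = tmul b a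
  /-- the tensor product `ω ⊗ ρ` of (normal) functionals -/
  funcTensor : (B H →ₗ[ℂ] ℂ) → (B H →ₗ[ℂ] ℂ) → (B H2 →ₗ[ℂ] ℂ)
  funcTensor_elem : ∀ ω ρ (x y : B H), funcTensor ω ρ (tensorOp x y) = ω x * ρ y
  funcTensor_normal : ∀ ω ρ, IsNormalFunctional H ω → IsNormalFunctional H ρ →
    IsNormalFunctional H2 (funcTensor ω ρ)
  /-- the left slice map `sliceL ω = ω ⊗ id : B(H2) → B(H)` -/
  sliceL : (B H →ₗ[ℂ] ℂ) → B H2 →ₗ[ℂ] B H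
  /-- the right slice map `sliceR ω = id ⊗ ω : B(H2) → B(H)` -/
  sliceR : (B H →ₗ[ℂ] ℂ) → B H2 →ₗ[ℂ] B H
  sliceL_char : ∀ ω X (ξ η : H),
    vecFunctional H ξ η (sliceL ω X) = funcTensor ω (vecFunctional H ξ η) X
  sliceR_char : ∀ ω X (ξ η : H),
    vecFunctional H ξ η (sliceR ω X) = funcTensor (vecFunctional H ξ η) ω X
  /-- the left regular co-representation `W` -/
  W : B H2
  W_unitary_l : star W * W = 1
  W_unitary_r : W * star W = 1
  /-- `W ∈ L∞(𝔾) ⊗̄ L∞(𝔾̂)` (via the commutation theorem for tensor products) -/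
  W_mem : ∀ a' ∈ M.commutant, ∀ b' ∈ Mhat.commutant, Commute W (tensorOp a' b')
  /-- the right regular co-representation `V` -/
  V : B H2
  V_unitary_l : star V * V = 1
  V_unitary_r : V * star V = 1
  /-- `V ∈ L∞(𝔾̂)' ⊗̄ L∞(𝔾)` (via the commutation theorem for tensor products) -/
  V_mem : ∀ a ∈ Mhat, ∀ b' ∈ M.commutant, Commute V (tensorOp a b')
  /-- `Δ` maps `L∞(𝔾)` into `L∞(𝔾) ⊗̄ L∞(𝔾)` -/
  Delta_mem : ∀ x ∈ M, ∀ a' ∈ M.commutant, ∀ b' ∈ M.commutant,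
    Commute (star W * tensorOp 1 x * W) (tensorOp a' b')
  /-- `V` also implements the co-multiplication: `Δ(x) = V(x ⊗ 1)V*` on `L∞(𝔾)` -/
  Delta_V : ∀ x ∈ M, star W * tensorOp 1 x * W = V * tensorOp x 1 * star V
  /-- slices of `Δ(x)`, `x ∈ L∞(𝔾)`, lie in `L∞(𝔾)` -/
  slice_Delta_mem : ∀ ω, ∀ x ∈ M, sliceL ω (star W * tensorOp 1 x * W) ∈ M
  /-- slices `(ω ⊗ id)(V (x ⊗ 1) V*)` lie in `L∞(𝔾)`, since `V ∈ L∞(𝔾̂)' ⊗̄ L∞(𝔾)` -/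
  sliceL_rConj_mem : ∀ ω (x : B H), sliceL ω (V * tensorOp x 1 * star V) ∈ M
  /-- the fixed-point characterization `L∞(𝔾̂) = {y : V(y ⊗ 1)V* = y ⊗ 1}`
  (cf. Kustermans–Vaes, proof of Proposition 4.2) -/
  fixedPoint_mem : ∀ y : B H, V * tensorOp y 1 * star V = tensorOp y 1 → y ∈ Mhat

namespace LCQG

variable {H H2} (Q : LCQG H H2)

/-- The (extended) co-multiplication `Δ̄ : B(L²(𝔾)) → L∞(𝔾) ⊗̄ B(L²(𝔾))`,
`Δ̄(x) = W*(1 ⊗ x)W`; its restriction to `L∞(𝔾)` is the co-multiplication `Δ`. -/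
def Delta (x : B H) : B H2 := star Q.W * Q.tensorOp 1 x * Q.W

/-- The map `x ↦ V (x ⊗ 1) V*` on `B(L²(𝔾))`. -/
def rConj : B H →ₗ[ℂ] B H2 where
  toFun x := Q.V * Q.tensorOp x 1 * star Q.V
  map_add' x y := by simp [mul_add, add_mul]
  map_smul' c x := by simp [mul_smul_comm, smul_mul_assoc]

/-- The left regular co-representation of the dual: `Ŵ = Σ W* Σ` (i.e. `σ(W)*`). -/
def What : B H2 := Q.flipU * star Q.W * Q.flipU

/-- The (extended) co-multiplication of the dual quantum group, `Δ̂(y) = Ŵ*(1 ⊗ y)Ŵ`. -/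
def Deltahat (y : B H) : B H2 := star Q.What * Q.tensorOp 1 y * Q.What

/-- `m` is a left-invariant mean on `L∞(𝔾)`: a state with
`m((ω ⊗ id)Δ(x)) = ω(1) m(x)` for all `x ∈ L∞(𝔾)` and normal `ω ∈ L¹(𝔾)`. -/
def IsLeftInvariantMean (m : B H →ₗ[ℂ] ℂ) : Prop :=
  IsStateOn H Q.M m ∧
    ∀ x ∈ Q.M, ∀ ω : B H →ₗ[ℂ] ℂ, IsNormalFunctional H ω →
      m (Q.sliceL ω (Q.Delta x)) = ω 1 * m x

/-- `𝔾` is amenable if it admits a left-invariant mean. -/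
def Amenable : Prop := ∃ m : B H →ₗ[ℂ] ℂ, Q.IsLeftInvariantMean m

/-- `𝔾` is quantum injective if there is a conditional expectation of `B(L²(𝔾))` onto
`L∞(𝔾)` mapping `L∞(𝔾̂)` into the center of `L∞(𝔾)`. -/
def QuantumInjective : Prop :=
  ∃ E : B H →ₗ[ℂ] B H, IsConditionalExpectation H Q.M E ∧
    ∀ x ∈ Q.Mhat, E x ∈ center H Q.M

end LCQG

/-- A discrete quantum group `𝔾` of Kac type: a locally compact quantum group whose dual
`𝔾̂` is compact — i.e. it possesses a (bi-invariant, normal) Haar state `φ̂` on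
`L∞(𝔾̂)` — such that `φ̂` is moreover a trace (Kac type).  The GNS construction of
`(L∞(𝔾̂), φ̂)` is canonically realized on `L²(𝔾)`, with GNS map `Λ = Λ_{φ̂}`. -/
structure DiscreteKacQG extends LCQG H H2 where
  /-- the Haar state `φ̂` of the compact dual `𝔾̂` -/
  phihat : B H →ₗ[ℂ] ℂ
  phihat_state : IsStateOn H toLCQG.Mhat phihat
  phihat_normal : IsNormalFunctional H phihat
  /-- Kac type: the dual Haar state is a trace -/
  phihat_tracial : ∀ a ∈ toLCQG.Mhat, ∀ b ∈ toLCQG.Mhat, phihat (a * b) = phihat (b * a)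
  /-- slices of `Δ̂(y)`, `y ∈ L∞(𝔾̂)`, lie in `L∞(𝔾̂)` -/
  slice_Deltahat_memL : ∀ ω, ∀ y ∈ toLCQG.Mhat, toLCQG.sliceL ω (toLCQG.Deltahat y) ∈ toLCQG.Mhat
  slice_Deltahat_memR : ∀ ω, ∀ y ∈ toLCQG.Mhat, toLCQG.sliceR ω (toLCQG.Deltahat y) ∈ toLCQG.Mhat
  /-- left invariance of `φ̂`: `φ̂((ω ⊗ id)Δ̂(y)) = ω(1) φ̂(y)` -/
  phihat_left_inv : ∀ y ∈ toLCQG.Mhat, ∀ ω : B H →ₗ[ℂ] ℂ, IsNormalFunctional H ω →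
    phihat (toLCQG.sliceL ω (toLCQG.Deltahat y)) = ω 1 * phihat y
  /-- right invariance of `φ̂`: `φ̂((id ⊗ ω)Δ̂(y)) = ω(1) φ̂(y)` -/
  phihat_right_inv : ∀ y ∈ toLCQG.Mhat, ∀ ω : B H →ₗ[ℂ] ℂ, IsNormalFunctional H ω →
    phihat (toLCQG.sliceR ω (toLCQG.Deltahat y)) = ω 1 * phihat y
  /-- the GNS map `Λ_{φ̂} : L∞(𝔾̂) → L²(𝔾)` -/
  Lam : B H → H
  Lam_inner : ∀ a ∈ toLCQG.Mhat, ∀ b ∈ toLCQG.Mhat, ⟪Lam a, Lam b⟫ = phihat (star a * b)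
  Lam_act : ∀ a ∈ toLCQG.Mhat, ∀ b ∈ toLCQG.Mhat, a (Lam b) = Lam (a * b)

set_option linter.unusedSectionVars false
set_option linter.unusedSimpArgs false
set_option linter.unnecessarySimpa false

section Basics

variable {H H2}

namespace LCQG

variable (Q : LCQG H H2)

theorem norm_tmul (a b : H) : ‖Q.tmul a b‖ = ‖a‖ * ‖b‖ := by
  have h := Q.tmul_inner a b a b
  rw [inner_self_eq_norm_sq_to_K, inner_self_eq_norm_sq_to_K, inner_self_eq_norm_sq_to_K] at h
  have h2 : ‖Q.tmul a b‖ ^ 2 = (‖a‖ * ‖b‖) ^ 2 := by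
    rw [mul_pow]; exact_mod_cast h
  exact (pow_left_inj₀ (norm_nonneg _) (by positivity) two_ne_zero).1 h2

/-- `b ↦ a ⊗ b`. -/
def insL (a : H) : H →L[ℂ] H2 :=
  LinearMap.mkContinuous (Q.tmul a) ‖a‖ (fun b => (Q.norm_tmul a b).le)

/-- `a ↦ a ⊗ b`. -/
def insR (b : H) : H →L[ℂ] H2 :=
  LinearMap.mkContinuous (Q.tmul.flip b) ‖b‖
    (fun a => by simp [Q.norm_tmul a b, mul_comm])

@[simp] theorem insL_apply (a b : H) : Q.insL a b = Q.tmul a b := rfl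
@[simp] theorem insR_apply (a b : H) : Q.insR b a = Q.tmul a b := rfl

theorem dense_tmul : Dense (Submodule.span ℂ {v : H2 | ∃ a b, v = Q.tmul a b} : Set H2) := by
  exact (Submodule.dense_iff_topologicalClosure_eq_top).2 Q.tmul_total

theorem ext_op {F : Type*} [NormedAddCommGroup F] [NormedSpace ℂ F] {X Y : H2 →L[ℂ] F}
    (h : ∀ a b, X (Q.tmul a b) = Y (Q.tmul a b)) : X = Y := by
  refine ContinuousLinearMap.ext_on Q.dense_tmul ?_
  rintro _ ⟨a, b, rfl⟩
  exact h a b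

theorem ext_vec {v w : H2} (h : ∀ a b, ⟪Q.tmul a b, v⟫ = ⟪Q.tmul a b, w⟫) : v = w := by
  have : innerSL ℂ v = innerSL ℂ w := by
    refine Q.ext_op fun a b => ?_
    simp only [innerSL_apply_apply]
    rw [← inner_conj_symm, h, inner_conj_symm]
  refine ext_inner_right ℂ fun u => ?_
  simpa using congrArg (fun f => f u) this

theorem ext_sesq {X Y : B H2}
    (h : ∀ a b c d, ⟪Q.tmul a b, X (Q.tmul c d)⟫ = ⟪Q.tmul a b, Y (Q.tmul c d)⟫) : X = Y :=
  Q.ext_op fun c d => Q.ext_vec fun a b => h a b c d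

theorem star_inner {K : Type*} [NormedAddCommGroup K] [InnerProductSpace ℂ K] [CompleteSpace K]
    (X : B K) (v w : K) : ⟪v, (star X) w⟫ = ⟪X v, w⟫ := by
  rw [ContinuousLinearMap.star_eq_adjoint, ContinuousLinearMap.adjoint_inner_right]

theorem star_inner_l {K : Type*} [NormedAddCommGroup K] [InnerProductSpace ℂ K] [CompleteSpace K]
    (X : B K) (v w : K) : ⟪(star X) v, w⟫ = ⟪v, X w⟫ := by
  rw [ContinuousLinearMap.star_eq_adjoint, ContinuousLinearMap.adjoint_inner_left]

theorem tensorOp_mul (x y x' y' : B H) :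
    Q.tensorOp x y * Q.tensorOp x' y' = Q.tensorOp (x * x') (y * y') :=
  Q.ext_op fun a b => by simp [Q.tensorOp_apply]

@[simp] theorem tensorOp_one : Q.tensorOp 1 1 = 1 :=
  Q.ext_op fun a b => by simp [Q.tensorOp_apply]

theorem star_tensorOp (x y : B H) : star (Q.tensorOp x y) = Q.tensorOp (star x) (star y) :=
  Q.ext_sesq fun a b c d => by
    rw [star_inner, Q.tensorOp_apply, Q.tensorOp_apply, Q.tmul_inner, Q.tmul_inner, star_inner,
      star_inner]

theorem flip_mul_flip : Q.flipU * Q.flipU = 1 :=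
  Q.ext_op fun a b => by simp [Q.flipU_apply]

theorem star_flip : star Q.flipU = Q.flipU :=
  Q.ext_sesq fun a b c d => by
    rw [star_inner, Q.flipU_apply, Q.flipU_apply, Q.tmul_inner, Q.tmul_inner, mul_comm]

theorem flip_tensor_flip (x y : B H) : Q.flipU * Q.tensorOp x y * Q.flipU = Q.tensorOp y x :=
  Q.ext_op fun a b => by simp [Q.tensorOp_apply, Q.flipU_apply]

/-- `(⟨d| ⊗ 1) X (|c⟩ ⊗ 1)` -/
def slL (X : B H2) (d c : H) : B H :=
  ContinuousLinearMap.adjoint (Q.insL d) ∘L X ∘L Q.insL c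

/-- `(1 ⊗ ⟨d|) X (1 ⊗ |c⟩)` -/
def slR (X : B H2) (d c : H) : B H :=
  ContinuousLinearMap.adjoint (Q.insR d) ∘L X ∘L Q.insR c

theorem inner_slL (X : B H2) (d c p q : H) :
    ⟪p, Q.slL X d c q⟫ = ⟪Q.tmul d p, X (Q.tmul c q)⟫ := by
  simp [slL, ContinuousLinearMap.adjoint_inner_right]

theorem inner_slR (X : B H2) (d c p q : H) :
    ⟪p, Q.slR X d c q⟫ = ⟪Q.tmul p d, X (Q.tmul q c)⟫ := by
  simp [slR, ContinuousLinearMap.adjoint_inner_right]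

theorem ext_B {K : Type*} [NormedAddCommGroup K] [InnerProductSpace ℂ K] {X Y : B K}
    (h : ∀ p q, ⟪p, X q⟫ = ⟪p, Y q⟫) : X = Y :=
  ContinuousLinearMap.ext fun q => ext_inner_left ℂ fun p => h p q

theorem star_slL (X : B H2) (d c : H) : star (Q.slL X d c) = Q.slL (star X) c d :=
  ext_B fun p q => by
    rw [star_inner, inner_slL, star_inner, ← inner_conj_symm, inner_slL, inner_conj_symm]

theorem star_slR (X : B H2) (d c : H) : star (Q.slR X d c) = Q.slR (star X) c d :=
  ext_B fun p q => by
    rw [star_inner, inner_slR, star_inner, ← inner_conj_symm, inner_slR, inner_conj_symm]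

theorem adj_insL_apply (X : B H2) (d c q : H) :
    ContinuousLinearMap.adjoint (Q.insL d) (X (Q.tmul c q)) = Q.slL X d c q := rfl

/-! Orthonormal bases -/

variable {ι : Type*} (e : HilbertBasis ι ℂ H)

theorem basis2_orth : Orthonormal ℂ (fun p : ι × ι => Q.tmul (e p.1) (e p.2)) := by
  classical
  rw [orthonormal_iff_ite]
  rintro ⟨i, j⟩ ⟨k, l⟩
  have := (orthonormal_iff_ite.1 e.orthonormal)
  rw [Q.tmul_inner, this, this]
  by_cases h1 : i = k <;> by_cases h2 : j = l <;> simp [h1, h2]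

theorem basis_ext {v w : H} (h : ∀ i, ⟪e i, v⟫ = ⟪e i, w⟫) : v = w := by
  apply e.repr.injective
  ext i
  rw [e.repr_apply_apply, e.repr_apply_apply, h]

/-- the basis `e_i ⊗ e_j` -/
def basis2 : HilbertBasis (ι × ι) ℂ H2 :=
  HilbertBasis.mkOfOrthogonalEqBot (Q.basis2_orth e) (by
    rw [Submodule.eq_bot_iff]
    intro v hv
    have h0 : ∀ i j, ⟪Q.tmul (e i) (e j), v⟫ = 0 := fun i j =>
      (Submodule.mem_orthogonal _ v).1 hv _ (Submodule.subset_span ⟨(i, j), rfl⟩)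
    have h1 : ∀ i b, ⟪Q.tmul (e i) b, v⟫ = 0 := by
      intro i b
      have : ContinuousLinearMap.adjoint (Q.insL (e i)) v = 0 := by
        refine basis_ext e fun j => ?_
        rw [ContinuousLinearMap.adjoint_inner_right]
        simp [h0]
      have h2 := ContinuousLinearMap.adjoint_inner_right (Q.insL (e i)) b v
      rw [this] at h2
      simpa using h2.symm
    refine Q.ext_vec fun a b => ?_
    have : ContinuousLinearMap.adjoint (Q.insR b) v = 0 := by
      refine basis_ext e fun j => ?_
      rw [ContinuousLinearMap.adjoint_inner_right]
      simp [h1]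
    have h2 := ContinuousLinearMap.adjoint_inner_right (Q.insR b) a v
    rw [this] at h2
    simpa using h2.symm)

@[simp] theorem basis2_apply (p : ι × ι) : Q.basis2 e p = Q.tmul (e p.1) (e p.2) := by
  simp [basis2]

theorem parsevalL (v w : H2) :
    HasSum (fun i => ⟪ContinuousLinearMap.adjoint (Q.insL (e i)) v,
      ContinuousLinearMap.adjoint (Q.insL (e i)) w⟫) ⟪v, w⟫ := by
  have h := (Q.basis2 e).hasSum_inner_mul_inner v w
  refine h.prod_fiberwise fun i => ?_
  have h2 := e.hasSum_inner_mul_inner (ContinuousLinearMap.adjoint (Q.insL (e i)) v)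
    (ContinuousLinearMap.adjoint (Q.insL (e i)) w)
  simpa [ContinuousLinearMap.adjoint_inner_right, ContinuousLinearMap.adjoint_inner_left] using h2

/-! Normal functionals -/

theorem aux_bound (x w v : ℝ) (hx : 0 ≤ x) : w * (x * v) ≤ x * (w ^ 2 + v ^ 2) := by
  have : 0 ≤ x * ((w - v) ^ 2 + w ^ 2 + v ^ 2) := by positivity
  nlinarith

theorem aux_conj_mul (z : ℂ) : (starRingEnd ℂ) z * z = ((‖z‖ ^ 2 : ℝ) : ℂ) := by
  rw [mul_comm, Complex.mul_conj, Complex.normSq_eq_norm_sq]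

theorem inner_self_eq {K : Type*} [NormedAddCommGroup K] [InnerProductSpace ℂ K] (v : K) :
    ⟪v, v⟫ = ((‖v‖ ^ 2 : ℝ) : ℂ) := by
  rw [inner_self_eq_norm_sq_to_K]; norm_cast

theorem bessel_aux {K : Type*} [NormedAddCommGroup K] [InnerProductSpace ℂ K]
    [CompleteSpace K] {J : Type*} (b : HilbertBasis J ℂ K) (S : Finset J) (v : K) :
    ‖∑ p ∈ S, ⟪b p, v⟫ • b p‖ ≤ ‖v‖ := by
  have h1 : ‖∑ p ∈ S, ⟪b p, v⟫ • b p‖ ^ 2 = ∑ p ∈ S, ‖⟪b p, v⟫‖ ^ 2 := by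
    have := b.orthonormal.inner_sum (fun p => ⟪b p, v⟫) (fun p => ⟪b p, v⟫) S
    simp only [aux_conj_mul] at this
    rw [inner_self_eq] at this
    exact_mod_cast this
  have h2 := b.orthonormal.sum_inner_products_le v (s := S)
  rw [← h1] at h2
  exact (pow_le_pow_iff_left₀ (norm_nonneg _) (norm_nonneg _) two_ne_zero).1 h2

theorem normal_tendsto {K : Type*} [NormedAddCommGroup K] [InnerProductSpace ℂ K]
    [CompleteSpace K] {J : Type*}
    (b : HilbertBasis J ℂ K) {κ : Type*} (ξ η : κ → K) (hξ : Summable fun n => ‖ξ n‖ ^ 2)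
    (hη : Summable fun n => ‖η n‖ ^ 2) (F : B K →ₗ[ℂ] ℂ)
    (hF : ∀ x, HasSum (fun n => ⟪η n, x (ξ n)⟫) (F x)) (X : B K) :
    Filter.Tendsto (fun S : Finset J => F (∑ p ∈ S, ∑ q ∈ S,
      ⟪b p, X (b q)⟫ • InnerProductSpace.rankOne ℂ (b p) (b q))) Filter.atTop (nhds (F X)) := by
  let P : Finset J → K → K := fun S v => ∑ p ∈ S, ⟪b p, v⟫ • b p
  have hP : ∀ v, Filter.Tendsto (fun S => P S v) Filter.atTop (nhds v) := by
    intro v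
    have := b.hasSum_repr v
    simpa [HasSum, P, b.repr_apply_apply] using this
  have hPn : ∀ S v, ‖P S v‖ ≤ ‖v‖ := by
    exact fun S v => bessel_aux b S v
  have key : ∀ S n, ⟪η n, (∑ p ∈ S, ∑ q ∈ S,
      ⟪b p, X (b q)⟫ • InnerProductSpace.rankOne ℂ (b p) (b q)) (ξ n)⟫
      = ⟪P S (η n), X (P S (ξ n))⟫ := by
    intro S n
    simp only [P, map_sum, map_smul, sum_inner, inner_sum, inner_smul_left, inner_smul_right,
      sum_apply, smul_apply,
      InnerProductSpace.rankOne_apply, inner_conj_symm]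
    rw [Finset.sum_comm]
    refine Finset.sum_congr rfl fun p _ => ?_
    rw [Finset.mul_sum]
    refine Finset.sum_congr rfl fun q _ => ?_
    ring
  have hts : ∀ Y, F Y = ∑' n, ⟪η n, Y (ξ n)⟫ := fun Y => (hF Y).tsum_eq.symm
  simp only [hts, key]
  refine tendsto_tsum_of_dominated_convergence
    (bound := fun n => ‖X‖ * ((‖η n‖ ^ 2 + ‖ξ n‖ ^ 2))) ((hη.add hξ).mul_left _) ?_ ?_
  · intro n
    exact (hP (η n)).inner ((X.continuous.tendsto _).comp (hP (ξ n)))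
  · refine Filter.Eventually.of_forall fun S n => ?_
    calc ‖⟪P S (η n), X (P S (ξ n))⟫‖ ≤ ‖P S (η n)‖ * ‖X (P S (ξ n))‖ := norm_inner_le_norm _ _
      _ ≤ ‖η n‖ * (‖X‖ * ‖ξ n‖) := by
          gcongr
          · exact hPn _ _
          · exact (X.le_opNorm _).trans (by gcongr; exact hPn _ _)
      _ ≤ _ := aux_bound _ _ _ (norm_nonneg _)

theorem rankOne_tensor (a b c d : H) :
    InnerProductSpace.rankOne ℂ (Q.tmul a b) (Q.tmul c d) =
      Q.tensorOp (InnerProductSpace.rankOne ℂ a c) (InnerProductSpace.rankOne ℂ b d) :=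
  Q.ext_op fun p q => by
    rw [Q.tensorOp_apply]
    simp [InnerProductSpace.rankOne_apply, Q.tmul_inner, smul_smul, mul_comm]

theorem normal_unique {κ κ' : Type*} (ξ η : κ → H2) (hξ : Summable fun n => ‖ξ n‖ ^ 2)
    (hη : Summable fun n => ‖η n‖ ^ 2) (F : B H2 →ₗ[ℂ] ℂ)
    (hF : ∀ x, HasSum (fun n => ⟪η n, x (ξ n)⟫) (F x))
    (ξ' η' : κ' → H2) (hξ' : Summable fun n => ‖ξ' n‖ ^ 2)
    (hη' : Summable fun n => ‖η' n‖ ^ 2) (F' : B H2 →ₗ[ℂ] ℂ)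
    (hF' : ∀ x, HasSum (fun n => ⟪η' n, x (ξ' n)⟫) (F' x))
    (h : ∀ x y, F (Q.tensorOp x y) = F' (Q.tensorOp x y)) (X : B H2) : F X = F' X := by
  obtain ⟨w, e, _⟩ := exists_hilbertBasis ℂ H
  have h1 := normal_tendsto (Q.basis2 e) ξ η hξ hη F hF X
  have h2 := normal_tendsto (Q.basis2 e) ξ' η' hξ' hη' F' hF' X
  refine tendsto_nhds_unique h1 (h2.congr fun S => ?_)
  simp only [map_sum, map_smul, basis2_apply, rankOne_tensor, h]

theorem vec_normal {K : Type*} [NormedAddCommGroup K] [InnerProductSpace ℂ K]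
    [CompleteSpace K] (ξ η : K) : IsNormalFunctional K (vecFunctional K ξ η) := by
  refine ⟨fun n => if n = 0 then ξ else 0, fun n => if n = 0 then η else 0, ?_, ?_, ?_⟩
  · refine summable_of_ne_finset_zero (s := {0}) ?_
    intro n hn; simp at hn; simp [hn]
  · refine summable_of_ne_finset_zero (s := {0}) ?_
    intro n hn; simp at hn; simp [hn]
  · intro x
    have := hasSum_ite_eq (0 : ℕ) (⟪η, x ξ⟫)
    refine this.congr_fun ?_
    intro n
    by_cases h : n = 0 <;> simp [h]

theorem summable_vec {K : Type*} [NormedAddCommGroup K] [InnerProductSpace ℂ K]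
    {κ : Type*} (ξ η : κ → K) (hξ : Summable fun n => ‖ξ n‖ ^ 2)
    (hη : Summable fun n => ‖η n‖ ^ 2) (Y : B K) : Summable fun n => ⟪η n, Y (ξ n)⟫ := by
  refine Summable.of_norm_bounded ((hη.add hξ).mul_left ‖Y‖) fun p => ?_
  have h1 : ‖⟪η p, Y (ξ p)⟫‖ ≤ ‖η p‖ * (‖Y‖ * ‖ξ p‖) :=
    (norm_inner_le_norm _ _).trans (by gcongr; exact Y.le_opNorm _)
  exact h1.trans (aux_bound _ _ _ (norm_nonneg _))

theorem exists_sumFunctional {K : Type*} [NormedAddCommGroup K] [InnerProductSpace ℂ K]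
    {κ : Type*} (ξ η : κ → K) (hξ : Summable fun n => ‖ξ n‖ ^ 2)
    (hη : Summable fun n => ‖η n‖ ^ 2) : ∃ F : B K →ₗ[ℂ] ℂ,
    ∀ Y, HasSum (fun n => ⟪η n, Y (ξ n)⟫) (F Y) := by
  have s3 := summable_vec ξ η hξ hη
  refine ⟨{ toFun := fun Y => ∑' p, ⟪η p, Y (ξ p)⟫
            map_add' := fun Y Z => ?_
            map_smul' := fun c Y => ?_ }, fun Y => (s3 Y).hasSum⟩
  · rw [← (s3 Y).tsum_add (s3 Z)]
    simp [inner_add_right]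
  · simp only [smul_apply, inner_smul_right, tsum_mul_left, smul_eq_mul, RingHom.id_apply]

/-- The product formula for normal functionals. -/
theorem funcTensor_hasSum {κ κ' : Type} (ξ η : κ → H) (hξ : Summable fun n => ‖ξ n‖ ^ 2)
    (hη : Summable fun n => ‖η n‖ ^ 2) (ω : B H →ₗ[ℂ] ℂ)
    (hω : ∀ x, HasSum (fun n => ⟪η n, x (ξ n)⟫) (ω x))
    (ξ' η' : κ' → H) (hξ' : Summable fun n => ‖ξ' n‖ ^ 2)
    (hη' : Summable fun n => ‖η' n‖ ^ 2) (ρ : B H →ₗ[ℂ] ℂ)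
    (hρ : ∀ x, HasSum (fun n => ⟪η' n, x (ξ' n)⟫) (ρ x))
    (hωn : IsNormalFunctional H ω) (hρn : IsNormalFunctional H ρ) (X : B H2) :
    HasSum (fun p : κ × κ' => ⟪Q.tmul (η p.1) (η' p.2), X (Q.tmul (ξ p.1) (ξ' p.2))⟫)
      (Q.funcTensor ω ρ X) := by
  have s1 : Summable fun p : κ × κ' => ‖Q.tmul (ξ p.1) (ξ' p.2)‖ ^ 2 := by
    simp only [norm_tmul, mul_pow]
    exact Summable.mul_of_nonneg (f := fun n => ‖ξ n‖ ^ 2) (g := fun n => ‖ξ' n‖ ^ 2) hξ hξ'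
      (fun _ => sq_nonneg _) (fun _ => sq_nonneg _)
  have s2 : Summable fun p : κ × κ' => ‖Q.tmul (η p.1) (η' p.2)‖ ^ 2 := by
    simp only [norm_tmul, mul_pow]
    exact Summable.mul_of_nonneg (f := fun n => ‖η n‖ ^ 2) (g := fun n => ‖η' n‖ ^ 2) hη hη'
      (fun _ => sq_nonneg _) (fun _ => sq_nonneg _)
  obtain ⟨F', hF'⟩ := exists_sumFunctional (fun p : κ × κ' => Q.tmul (ξ p.1) (ξ' p.2))
    (fun p : κ × κ' => Q.tmul (η p.1) (η' p.2)) s1 s2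
  obtain ⟨u, v, hu, hv, huv⟩ := Q.funcTensor_normal ω ρ hωn hρn
  have hel : ∀ x y : B H, Q.funcTensor ω ρ (Q.tensorOp x y) = F' (Q.tensorOp x y) := by
    intro x y
    rw [Q.funcTensor_elem]
    have hh := hF' (Q.tensorOp x y)
    simp only [Q.tensorOp_apply, Q.tmul_inner] at hh
    have h5 : HasSum (fun n => ⟪η n, x (ξ n)⟫ * ρ y) (F' (Q.tensorOp x y)) :=
      HasSum.prod_fiberwise hh (fun n => (hρ y).mul_left (⟪η n, x (ξ n)⟫))
    exact ((hω x).mul_right (ρ y)).unique h5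
  have h6 : Q.funcTensor ω ρ X = F' X :=
    Q.normal_unique u v hu hv (Q.funcTensor ω ρ) huv (fun p : κ × κ' => Q.tmul (ξ p.1) (ξ' p.2))
      (fun p : κ × κ' => Q.tmul (η p.1) (η' p.2)) s1 s2 F' hF' hel X
  rw [h6]
  exact hF' X

theorem funcTensor_vec (c d ξ η : H) (X : B H2) :
    Q.funcTensor (vecFunctional H c d) (vecFunctional H ξ η) X = ⟪Q.tmul d η, X (Q.tmul c ξ)⟫ := by
  have h := Q.funcTensor_hasSum (κ := Unit) (κ' := Unit) (fun _ => c) (fun _ => d)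
    (hasSum_fintype _).summable (hasSum_fintype _).summable (vecFunctional H c d)
    (fun x => by simpa [vecFunctional] using hasSum_fintype (fun _ : Unit => ⟪d, x c⟫))
    (fun _ => ξ) (fun _ => η)
    (hasSum_fintype _).summable (hasSum_fintype _).summable (vecFunctional H ξ η)
    (fun x => by simpa [vecFunctional] using hasSum_fintype (fun _ : Unit => ⟪η, x ξ⟫))
    (vec_normal _ _) (vec_normal _ _) X
  have h2 := h.unique (hasSum_fintype _)
  simpa using h2

theorem sliceL_vec (c d : H) (X : B H2) : Q.sliceL (vecFunctional H c d) X = Q.slL X d c :=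
  ext_B fun p q => by
    rw [inner_slL, ← funcTensor_vec, ← Q.sliceL_char]; rfl

theorem sliceR_vec (c d : H) (X : B H2) : Q.sliceR (vecFunctional H c d) X = Q.slR X d c :=
  ext_B fun p q => by
    rw [inner_slR, ← funcTensor_vec, ← Q.sliceR_char]; rfl

end LCQG

end Basics


section Kac1

variable {H H2}

namespace LCQG

variable (Q : LCQG H H2)

theorem slL_mul_right (X : B H2) (y : B H) (d c : H) :
    Q.slL (X * Q.tensorOp 1 y) d c = Q.slL X d c * y :=
  ext_B fun p q => by simp [inner_slL, Q.tensorOp_apply]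

theorem slL_mul_left (X : B H2) (y : B H) (d c : H) :
    Q.slL (Q.tensorOp 1 y * X) d c = y * Q.slL X d c :=
  ext_B fun p q => by
    have h : (Q.tensorOp 1 y) = star (Q.tensorOp 1 (star y)) := by simp [star_tensorOp]
    rw [inner_slL, h, mul_apply_eq_comp, star_inner, Q.tensorOp_apply,
      mul_apply_eq_comp]
    have h' : y = star (star y) := by simp
    conv_rhs => rw [h', star_inner, inner_slL]
    simp

theorem slR_mul_right (X : B H2) (y : B H) (d c : H) :
    Q.slR (X * Q.tensorOp y 1) d c = Q.slR X d c * y :=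
  ext_B fun p q => by simp [inner_slR, Q.tensorOp_apply]

theorem slR_mul_left (X : B H2) (y : B H) (d c : H) :
    Q.slR (Q.tensorOp y 1 * X) d c = y * Q.slR X d c :=
  ext_B fun p q => by
    have h : (Q.tensorOp y 1) = star (Q.tensorOp (star y) 1) := by simp [star_tensorOp]
    rw [inner_slR, h, mul_apply_eq_comp, star_inner, Q.tensorOp_apply,
      mul_apply_eq_comp]
    have h' : y = star (star y) := by simp
    conv_rhs => rw [h', star_inner, inner_slR]
    simp

theorem slL_ext {X Y : B H2} (h : ∀ d c, Q.slL X d c = Q.slL Y d c) : X = Y :=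
  Q.ext_sesq fun a b c d => by rw [← inner_slL, h, inner_slL]

theorem slR_ext {X Y : B H2} (h : ∀ d c, Q.slR X d c = Q.slR Y d c) : X = Y :=
  Q.ext_sesq fun a b c d => by rw [← inner_slR, h, inner_slR]

theorem mem_of_commute {N : VonNeumannAlgebra H} {x : B H}
    (h : ∀ a' ∈ N.commutant, Commute x a') : x ∈ N := by
  rw [← N.commutant_commutant, VonNeumannAlgebra.mem_commutant_iff]
  exact fun g hg => (h g hg).eq.symm

theorem commute_of_mem {N : VonNeumannAlgebra H} {x a' : B H} (hx : x ∈ N)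
    (ha : a' ∈ N.commutant) : Commute x a' :=
  VonNeumannAlgebra.mem_commutant_iff.1 ha x hx

theorem slL_mem_iff (N : VonNeumannAlgebra H) (X : B H2) :
    (∀ d c, Q.slL X d c ∈ N) ↔ ∀ a' ∈ N.commutant, Commute X (Q.tensorOp 1 a') := by
  constructor
  · intro h a' ha
    refine Q.slL_ext fun d c => ?_
    rw [slL_mul_right, slL_mul_left]
    exact (commute_of_mem (h d c) ha).eq
  · intro h d c
    refine mem_of_commute fun a' ha => ?_
    have := congrArg (fun Y => Q.slL Y d c) (h a' ha).eq
    simp only [slL_mul_right, slL_mul_left] at this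
    exact this

theorem slR_mem_iff (N : VonNeumannAlgebra H) (X : B H2) :
    (∀ d c, Q.slR X d c ∈ N) ↔ ∀ a' ∈ N.commutant, Commute X (Q.tensorOp a' 1) := by
  constructor
  · intro h a' ha
    refine Q.slR_ext fun d c => ?_
    rw [slR_mul_right, slR_mul_left]
    exact (commute_of_mem (h d c) ha).eq
  · intro h d c
    refine mem_of_commute fun a' ha => ?_
    have := congrArg (fun Y => Q.slR Y d c) (h a' ha).eq
    simp only [slR_mul_right, slR_mul_left] at this
    exact this

/-- matrix coefficients of `W` in the first leg -/
def w (d c : H) : B H := Q.slL Q.W d c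

theorem w_mem (d c : H) : Q.w d c ∈ Q.Mhat :=
  (Q.slL_mem_iff Q.Mhat Q.W).2 (fun a' ha => Q.W_mem 1 (one_mem _) a' ha) d c

theorem x_mem (d c : H) : Q.slR Q.W d c ∈ Q.M :=
  (Q.slR_mem_iff Q.M Q.W).2 (fun a' ha => Q.W_mem a' ha 1 (one_mem _)) d c

/-- the flipped dual comultiplication -/
def D (y : B H) : B H2 := Q.W * Q.tensorOp y 1 * star Q.W

theorem Deltahat_eq (y : B H) : Q.Deltahat y = Q.flipU * Q.D y * Q.flipU := by
  have h : Q.tensorOp y 1 = Q.flipU * Q.tensorOp 1 y * Q.flipU := by rw [flip_tensor_flip]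
  simp only [Deltahat, What, D, h, star_mul, star_flip, star_star, mul_assoc]

theorem star_D (y : B H) : star (Q.D y) = Q.D (star y) := by
  simp [D, star_mul, star_tensorOp, mul_assoc]

theorem D_mul (y z : B H) : Q.D y * Q.D z = Q.D (y * z) := by
  have h := Q.W_unitary_l
  calc Q.D y * Q.D z = Q.W * Q.tensorOp y 1 * (star Q.W * Q.W) * Q.tensorOp z 1 * star Q.W := by
        simp only [D, mul_assoc]
    _ = _ := by rw [h, mul_one, mul_assoc Q.W, tensorOp_mul, one_mul, D]

theorem inner_flip (v w : H2) : ⟪v, Q.flipU w⟫ = ⟪Q.flipU v, w⟫ := by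
  conv_lhs => rw [← star_flip, star_inner]

theorem slL_Deltahat (y : B H) (d c : H) : Q.slL (Q.Deltahat y) d c = Q.slR (Q.D y) d c :=
  ext_B fun p q => by
    rw [inner_slL, inner_slR, Deltahat_eq]
    simp [inner_flip, Q.flipU_apply]

theorem slR_Deltahat (y : B H) (d c : H) : Q.slR (Q.Deltahat y) d c = Q.slL (Q.D y) d c :=
  ext_B fun p q => by
    rw [inner_slL, inner_slR, Deltahat_eq]
    simp [inner_flip, Q.flipU_apply]

/-- the algebra `L∞(𝔾̂) ⊗̄ L∞(𝔾̂)`. -/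
def AA : StarSubalgebra ℂ (B H2) :=
  StarSubalgebra.centralizer ℂ
    {Y : B H2 | ∃ a' ∈ Q.Mhat.commutant, Y = Q.tensorOp a' 1 ∨ Y = Q.tensorOp 1 a'}

theorem mem_AA {Y : B H2} : Y ∈ Q.AA ↔
    (∀ d c, Q.slL Y d c ∈ Q.Mhat) ∧ (∀ d c, Q.slR Y d c ∈ Q.Mhat) := by
  rw [slL_mem_iff, slR_mem_iff, AA, StarSubalgebra.mem_centralizer_iff]
  constructor
  · intro h
    exact ⟨fun a' ha => ((h _ ⟨a', ha, Or.inr rfl⟩).1).symm,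
      fun a' ha => ((h _ ⟨a', ha, Or.inl rfl⟩).1).symm⟩
  · rintro ⟨h1, h2⟩ _ ⟨a', ha, rfl | rfl⟩
    · refine ⟨(h2 a' ha).eq.symm, ?_⟩
      rw [star_tensorOp, star_one]
      exact (h2 _ (star_mem ha)).eq.symm
    · refine ⟨(h1 a' ha).eq.symm, ?_⟩
      rw [star_tensorOp, star_one]
      exact (h1 _ (star_mem ha)).eq.symm

theorem mem_AA' {Y : B H2} : Y ∈ Q.AA ↔
    (∀ a' ∈ Q.Mhat.commutant, Commute Y (Q.tensorOp 1 a')) ∧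
    (∀ a' ∈ Q.Mhat.commutant, Commute Y (Q.tensorOp a' 1)) := by
  rw [mem_AA, slL_mem_iff, slR_mem_iff]

theorem tensorOp_mem_AA {a b : B H} (ha : a ∈ Q.Mhat) (hb : b ∈ Q.Mhat) :
    Q.tensorOp a b ∈ Q.AA := by
  rw [mem_AA']
  constructor
  · intro a' ha'
    have := (commute_of_mem hb ha').eq
    simp [Commute, SemiconjBy, tensorOp_mul, this]
  · intro a' ha'
    have := (commute_of_mem ha ha').eq
    simp [Commute, SemiconjBy, tensorOp_mul, this]

end LCQG

namespace DiscreteKacQG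

open LCQG

variable (Q : DiscreteKacQG H H2)

theorem D_mem {y : B H} (hy : y ∈ Q.Mhat) : Q.toLCQG.D y ∈ Q.toLCQG.AA := by
  rw [mem_AA]
  refine ⟨fun d c => ?_, fun d c => ?_⟩
  · rw [← slR_Deltahat, ← sliceR_vec]
    exact Q.slice_Deltahat_memR _ y hy
  · rw [← slL_Deltahat, ← sliceL_vec]
    exact Q.slice_Deltahat_memL _ y hy

/-- the cyclic trace vector -/
def xi : H := Q.Lam 1

theorem Lam_eq {a : B H} (ha : a ∈ Q.Mhat) : Q.Lam a = a Q.xi := by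
  rw [xi, Q.Lam_act a ha 1 (one_mem _), mul_one]

/-- tracial vectors: those implementing `φ̂`. -/
def TV (ξ : H) : Prop := ∀ a ∈ Q.Mhat, ⟪ξ, a ξ⟫ = Q.phihat a

theorem TV_xi : Q.TV Q.xi := fun a ha => by
  have := Q.Lam_inner 1 (one_mem _) a ha
  rw [star_one, one_mul, Q.Lam_eq ha] at this
  exact this

theorem inner_xi {a b : B H} (ha : a ∈ Q.Mhat) (hb : b ∈ Q.Mhat) :
    ⟪a Q.xi, b Q.xi⟫ = Q.phihat (star a * b) := by
  rw [← Q.TV_xi _ (mul_mem (star_mem ha) hb), mul_apply_eq_comp, star_inner]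

theorem TV_inner {ξ : H} (hξ : Q.TV ξ) {a b : B H} (ha : a ∈ Q.Mhat) (hb : b ∈ Q.Mhat) :
    ⟪a ξ, b ξ⟫ = Q.phihat (star a * b) := by
  rw [← hξ _ (mul_mem (star_mem ha) hb), mul_apply_eq_comp, star_inner]

theorem TV_norm {ξ : H} (hξ : Q.TV ξ) : ⟪ξ, ξ⟫ = 1 := by
  have := hξ 1 (one_mem _)
  rw [Q.phihat_state.1] at this
  simpa using this

theorem TV_unitary {u : B H} (hu : u ∈ Q.Mhat) (h' : u * star u = 1) :
    Q.TV (u Q.xi) := fun a ha => by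
  have := Q.inner_xi hu (mul_mem ha hu)
  rw [mul_apply_eq_comp] at this
  rw [this, Q.phihat_tracial _ (star_mem hu) _ (mul_mem ha hu), mul_assoc, h', mul_one]

theorem inv_left {y : B H} (hy : y ∈ Q.Mhat) {ξ : H} (hξ : Q.TV ξ) (c d : H) :
    ⟪Q.tmul c ξ, Q.toLCQG.D y (Q.tmul d ξ)⟫ = ⟪c, d⟫ * Q.phihat y := by
  have h := Q.phihat_right_inv y hy (vecFunctional H d c) (vec_normal _ _)
  rw [sliceR_vec, slR_Deltahat] at h
  rw [← inner_slL, hξ _ ((Q.toLCQG.mem_AA.1 (Q.D_mem hy)).1 _ _), h]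
  simp [vecFunctional]

theorem inv_right {y : B H} (hy : y ∈ Q.Mhat) {ξ : H} (hξ : Q.TV ξ) (c d : H) :
    ⟪Q.tmul ξ c, Q.toLCQG.D y (Q.tmul ξ d)⟫ = ⟪c, d⟫ * Q.phihat y := by
  have h := Q.phihat_left_inv y hy (vecFunctional H d c) (vec_normal _ _)
  rw [sliceL_vec, slL_Deltahat] at h
  rw [← inner_slR, hξ _ ((Q.toLCQG.mem_AA.1 (Q.D_mem hy)).2 _ _), h]
  simp [vecFunctional]

theorem scalar_of_mem {x : B H} (hM : x ∈ Q.M) (hA : x ∈ Q.Mhat) :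
    x = Q.phihat x • (1 : B H) := by
  have h1 : star Q.W * Q.tensorOp 1 x * Q.W = Q.tensorOp x 1 := by
    rw [Q.Delta_V x hM, (Q.V_mem x hA 1 (one_mem _)).eq, mul_assoc, Q.V_unitary_r, mul_one]
  have h2 : Q.toLCQG.D x = Q.tensorOp 1 x := by
    rw [D, ← h1]
    have := Q.W_unitary_r
    calc _ = (Q.W * star Q.W) * Q.tensorOp 1 x * (Q.W * star Q.W) := by simp only [mul_assoc]
      _ = _ := by rw [this, one_mul, mul_one]
  refine ext_B fun p q => ?_
  have h3 := Q.inv_right hA Q.TV_xi p q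
  rw [h2, Q.tensorOp_apply, Q.tmul_inner] at h3
  simp only [one_apply_eq_self, Q.TV_norm Q.TV_xi, one_mul] at h3
  rw [h3]
  simp [inner_smul_right, mul_comm]

/-- `(φ̂ ⊗ φ̂)` on `L∞(𝔾̂) ⊗̄ L∞(𝔾̂)` is the vector state of `ξ₀ ⊗ ξ₀`. -/
theorem funcTensor_phihat {Y : B H2} (hY : Y ∈ Q.toLCQG.AA) :
    Q.funcTensor Q.phihat Q.phihat Y = ⟪Q.tmul Q.xi Q.xi, Y (Q.tmul Q.xi Q.xi)⟫ := by
  obtain ⟨ξ, η, hξ, hη, hs⟩ := Q.phihat_normal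
  have h := Q.toLCQG.funcTensor_hasSum ξ η hξ hη Q.phihat hs ξ η hξ hη Q.phihat hs
    Q.phihat_normal Q.phihat_normal Y
  obtain ⟨hL, hR⟩ := Q.toLCQG.mem_AA.1 hY
  have h1 : HasSum (fun n => ⟪η n, Q.toLCQG.slR Y Q.xi Q.xi (ξ n)⟫)
      (Q.funcTensor Q.phihat Q.phihat Y) := by
    refine HasSum.prod_fiberwise h fun n => ?_
    have h2 := hs (Q.toLCQG.slL Y (η n) (ξ n))
    rw [← Q.TV_xi _ (hL _ _), inner_slL] at h2
    rw [inner_slR]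
    simpa only [inner_slL] using h2
  have h3 := h1.unique (hs _)
  rw [h3, ← Q.TV_xi _ (hR _ _), inner_slR]

end DiscreteKacQG

end Kac1


section Trace

variable {H H2}

open LCQG in
/-- Abstract extension of traciality. -/
theorem trace_ext {K : Type*} [NormedAddCommGroup K] [InnerProductSpace ℂ K] [CompleteSpace K]
    (Ω : K) (T : Submodule ℂ (B K)) (hstar : ∀ t ∈ T, star t ∈ T) (A : StarSubalgebra ℂ (B K))
    (hTA : ∀ t ∈ T, t ∈ A)
    (htr : ∀ t ∈ T, ∀ Y ∈ A, ⟪Ω, (t * Y) Ω⟫ = ⟪Ω, (Y * t) Ω⟫)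
    (hcyc : ∀ Y ∈ A, Y Ω ∈ closure {v : K | ∃ t ∈ T, v = t Ω})
    (Y Z : B K) (hY : Y ∈ A) (hZ : Z ∈ A) : ⟪Ω, (Y * Z) Ω⟫ = ⟪Ω, (Z * Y) Ω⟫ := by
  obtain ⟨x, hx, hlim⟩ := mem_closure_iff_seq_limit.1 (hcyc Z hZ)
  choose t ht hxt using hx
  have hlim' : Filter.Tendsto (fun n => t n Ω) Filter.atTop (nhds (Z Ω)) :=
    hlim.congr hxt
  have hn : ∀ s ∈ T, ‖(star s) Ω‖ = ‖s Ω‖ := by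
    intro s hs
    have h := htr s hs (star s) (hTA _ (hstar s hs))
    simp only [mul_apply_eq_comp] at h
    have k1 : ⟪Ω, s ((star s) Ω)⟫ = ⟪(star s) Ω, (star s) Ω⟫ := (star_inner_l s _ _).symm
    have k2 : ⟪Ω, (star s) (s Ω)⟫ = ⟪s Ω, s Ω⟫ := star_inner s _ _
    rw [k1, k2, inner_self_eq, inner_self_eq] at h
    have h' : ‖(star s) Ω‖ ^ 2 = ‖s Ω‖ ^ 2 := by exact_mod_cast h
    exact (pow_left_inj₀ (norm_nonneg _) (norm_nonneg _) two_ne_zero).1 h'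
  have hcau : CauchySeq (fun n => (star (t n)) Ω) := by
    have h1 := hlim'.cauchySeq
    rw [Metric.cauchySeq_iff] at h1 ⊢
    intro ε hε
    obtain ⟨N, hN⟩ := h1 ε hε
    refine ⟨N, fun m hm n hn' => ?_⟩
    have h2 := hN m hm n hn'
    rw [dist_eq_norm] at h2 ⊢
    have h3 := hn (t m - t n) (T.sub_mem (ht m) (ht n))
    rw [star_sub, sub_apply, sub_apply] at h3
    rw [h3]; exact h2
  obtain ⟨v, hv⟩ := cauchySeq_tendsto_of_complete hcau
  -- both `v` and `Z* Ω` lie in the closed subspace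
  let S : Submodule ℂ K := (T.map (ContinuousLinearMap.apply ℂ K Ω : B K →L[ℂ] K).toLinearMap)
  have hS : {v : K | ∃ t ∈ T, v = t Ω} = (S : Set K) := by
    ext u; constructor
    · rintro ⟨s, hs, rfl⟩; exact ⟨s, hs, rfl⟩
    · rintro ⟨s, hs, rfl⟩; exact ⟨s, hs, rfl⟩
  have hvS : v ∈ S.topologicalClosure := by
    refine mem_closure_of_tendsto hv (Filter.Eventually.of_forall fun n => ?_)
    exact ⟨star (t n), hstar _ (ht n), rfl⟩
  have hZS : (star Z) Ω ∈ S.topologicalClosure := by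
    have := hcyc (star Z) (star_mem hZ)
    rw [hS] at this
    exact this
  have horth : ∀ u ∈ S, ⟪u, v - (star Z) Ω⟫ = 0 := by
    rintro _ ⟨s, hs, rfl⟩
    change ⟪s Ω, v - (star Z) Ω⟫ = 0
    have h1 : Filter.Tendsto (fun n => ⟪s Ω, (star (t n)) Ω⟫) Filter.atTop (nhds ⟪s Ω, v⟫) :=
      tendsto_const_nhds.inner hv
    have h2 : ∀ n, ⟪s Ω, (star (t n)) Ω⟫ = ⟪t n Ω, (star s) Ω⟫ := by
      intro n
      have := htr (star s) (hstar s hs) (star (t n)) (hTA _ (hstar _ (ht n)))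
      simp only [mul_apply_eq_comp] at this
      rwa [star_inner s Ω ((star (t n)) Ω), star_inner (t n) Ω ((star s) Ω)] at this
    have h3 : Filter.Tendsto (fun n => ⟪t n Ω, (star s) Ω⟫) Filter.atTop
      (nhds ⟪Z Ω, (star s) Ω⟫) := hlim'.inner tendsto_const_nhds
    have h4 := tendsto_nhds_unique (h1.congr h2) h3
    have h5 := htr (star s) (hstar s hs) (star Z) (star_mem hZ)
    simp only [mul_apply_eq_comp] at h5
    rw [star_inner s Ω ((star Z) Ω), star_inner Z Ω ((star s) Ω)] at h5
    rw [inner_sub_right, h4, h5, sub_self]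
  have hvZ : v = (star Z) Ω := by
    have hm : v - (star Z) Ω ∈ S.topologicalClosure := Submodule.sub_mem _ hvS hZS
    have ho : v - (star Z) Ω ∈ S.topologicalClosureᗮ := by
      rw [Submodule.orthogonal_closure]
      exact (Submodule.mem_orthogonal _ _).2 horth
    have := (Submodule.mem_orthogonal _ _).1 ho _ hm
    exact sub_eq_zero.1 (inner_self_eq_zero.1 this)
  have e1 : Filter.Tendsto (fun n => ⟪Ω, Y (t n Ω)⟫) Filter.atTop (nhds ⟪Ω, Y (Z Ω)⟫) :=
    tendsto_const_nhds.inner ((Y.continuous.tendsto _).comp hlim')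
  have e2 : Filter.Tendsto (fun n => ⟪(star (t n)) Ω, Y Ω⟫) Filter.atTop
      (nhds ⟪(star Z) Ω, Y Ω⟫) := by
    rw [← hvZ]; exact hv.inner tendsto_const_nhds
  have e3 : ∀ n, ⟪Ω, Y (t n Ω)⟫ = ⟪(star (t n)) Ω, Y Ω⟫ := by
    intro n
    have := htr (t n) (ht n) Y hY
    simp only [mul_apply_eq_comp] at this
    rw [star_inner_l, this]
  have e4 := tendsto_nhds_unique (e1.congr e3) e2
  rw [mul_apply_eq_comp, mul_apply_eq_comp, e4, star_inner_l]

namespace DiscreteKacQG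

open LCQG

variable (Q : DiscreteKacQG H H2)

/-- the cyclic subspace of `ξ` -/
def cyc (ξ : H) : Submodule ℂ H :=
  (Submodule.span ℂ {v | ∃ a ∈ Q.Mhat, v = a ξ}).topologicalClosure

theorem exists_proj (ξ : H) : ∃ e ∈ Q.Mhat.commutant, star e = e ∧ e ξ = ξ ∧
    ∀ v, e v ∈ Q.cyc ξ := by
  have hcl : IsClosed (Q.cyc ξ : Set H) := Submodule.isClosed_topologicalClosure _
  have : CompleteSpace (Q.cyc ξ) := hcl.completeSpace_coe
  have hsp : IsStarProjection (Q.cyc ξ).starProjection := isStarProjection_starProjection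
  refine ⟨(Q.cyc ξ).starProjection, ?_, hsp.isSelfAdjoint.star_eq, ?_, ?_⟩
  · rw [VonNeumannAlgebra.IsStarProjection.mem_iff hsp]
    intro y hy
    rw [VonNeumannAlgebra.commutant_commutant] at hy
    rw [Submodule.range_starProjection, Module.End.mem_invtSubmodule]
    have h1 : Submodule.span ℂ {v | ∃ a ∈ Q.Mhat, v = a ξ} ≤
        (Q.cyc ξ).comap (y : H →ₗ[ℂ] H) := by
      rw [Submodule.span_le]
      rintro _ ⟨a, ha, rfl⟩
      exact Submodule.le_topologicalClosure _ (Submodule.subset_span ⟨y * a, mul_mem hy ha, rfl⟩)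
    exact Submodule.topologicalClosure_minimal _ h1 (hcl.preimage y.continuous)
  · rw [Submodule.starProjection_eq_self_iff]
    exact Submodule.le_topologicalClosure _ (Submodule.subset_span ⟨1, one_mem _, rfl⟩)
  · exact fun v => Submodule.starProjection_apply_mem _ v

/-- finite sums of elementary tensors -/
def TT : Submodule ℂ (B H2) :=
  Submodule.span ℂ {t | ∃ a ∈ Q.Mhat, ∃ b ∈ Q.Mhat, t = Q.tensorOp a b}

theorem TT_star : ∀ t ∈ Q.TT, star t ∈ Q.TT := by
  intro t ht
  induction ht using Submodule.span_induction with
  | mem x hx =>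
    obtain ⟨a, ha, b, hb, rfl⟩ := hx
    rw [star_tensorOp]
    exact Submodule.subset_span ⟨_, star_mem ha, _, star_mem hb, rfl⟩
  | zero => simp
  | add x y _ _ hx hy => rw [star_add]; exact add_mem hx hy
  | smul c x _ hx => rw [star_smul]; exact Submodule.smul_mem _ _ hx

theorem TT_AA : ∀ t ∈ Q.TT, t ∈ Q.toLCQG.AA := by
  intro t ht
  induction ht using Submodule.span_induction with
  | mem x hx =>
    obtain ⟨a, ha, b, hb, rfl⟩ := hx
    exact Q.toLCQG.tensorOp_mem_AA ha hb
  | zero => exact zero_mem _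
  | add x y _ _ hx hy => exact add_mem hx hy
  | smul c x _ hx => exact SMulMemClass.smul_mem c hx

theorem TT_trace {ξ₁ ξ₂ : H} (h₁ : Q.TV ξ₁) (h₂ : Q.TV ξ₂) : ∀ t ∈ Q.TT, ∀ Y ∈ Q.toLCQG.AA,
    ⟪Q.tmul ξ₁ ξ₂, (t * Y) (Q.tmul ξ₁ ξ₂)⟫ = ⟪Q.tmul ξ₁ ξ₂, (Y * t) (Q.tmul ξ₁ ξ₂)⟫ := by
  have A1 : ∀ a ∈ Q.Mhat, ∀ Y ∈ Q.toLCQG.AA,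
      ⟪Q.tmul ξ₁ ξ₂, (Q.tensorOp a 1 * Y) (Q.tmul ξ₁ ξ₂)⟫ =
      ⟪Q.tmul ξ₁ ξ₂, (Y * Q.tensorOp a 1) (Q.tmul ξ₁ ξ₂)⟫ := by
    intro a ha Y hY
    have hs := (Q.toLCQG.mem_AA.1 hY).2 ξ₂ ξ₂
    rw [← inner_slR, ← inner_slR, slR_mul_left, slR_mul_right, h₁ _ (mul_mem ha hs),
      h₁ _ (mul_mem hs ha), Q.phihat_tracial _ ha _ hs]
  have A2 : ∀ a ∈ Q.Mhat, ∀ Y ∈ Q.toLCQG.AA,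
      ⟪Q.tmul ξ₁ ξ₂, (Q.tensorOp 1 a * Y) (Q.tmul ξ₁ ξ₂)⟫ =
      ⟪Q.tmul ξ₁ ξ₂, (Y * Q.tensorOp 1 a) (Q.tmul ξ₁ ξ₂)⟫ := by
    intro a ha Y hY
    have hs := (Q.toLCQG.mem_AA.1 hY).1 ξ₁ ξ₁
    rw [← inner_slL, ← inner_slL, slL_mul_left, slL_mul_right, h₂ _ (mul_mem ha hs),
      h₂ _ (mul_mem hs ha), Q.phihat_tracial _ ha _ hs]
  intro t ht
  induction ht using Submodule.span_induction with
  | mem x hx =>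
    obtain ⟨a, ha, b, hb, rfl⟩ := hx
    intro Y hY
    have e : Q.tensorOp a b = Q.tensorOp a 1 * Q.tensorOp 1 b := by simp [tensorOp_mul]
    have e' : Q.tensorOp a b = Q.tensorOp 1 b * Q.tensorOp a 1 := by simp [tensorOp_mul]
    have ha1 := Q.toLCQG.tensorOp_mem_AA ha (one_mem Q.Mhat)
    have hb1 := Q.toLCQG.tensorOp_mem_AA (one_mem Q.Mhat) hb
    calc _ = ⟪Q.tmul ξ₁ ξ₂, (Q.tensorOp a 1 * (Q.tensorOp 1 b * Y)) (Q.tmul ξ₁ ξ₂)⟫ := by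
          rw [e, mul_assoc]
      _ = ⟪Q.tmul ξ₁ ξ₂, (Q.tensorOp 1 b * (Y * Q.tensorOp a 1)) (Q.tmul ξ₁ ξ₂)⟫ := by
          rw [A1 a ha _ (mul_mem hb1 hY), mul_assoc]
      _ = _ := by rw [A2 b hb _ (mul_mem hY ha1), mul_assoc, ← e]
  | zero => intro Y _; simp
  | add x y _ _ hx hy =>
    intro Y hY
    rw [add_mul, mul_add, add_apply, add_apply, inner_add_right, inner_add_right, hx Y hY, hy Y hY]
  | smul c x _ hx =>
    intro Y hY
    rw [smul_mul_assoc, mul_smul_comm, smul_apply, smul_apply, inner_smul_right, inner_smul_right,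
      hx Y hY]

theorem TT_cyc (ξ₁ ξ₂ : H) : ∀ Y ∈ Q.toLCQG.AA,
    Y (Q.tmul ξ₁ ξ₂) ∈ closure {v : H2 | ∃ t ∈ Q.TT, v = t (Q.tmul ξ₁ ξ₂)} := by
  intro Y hY
  let S : Submodule ℂ H2 :=
    (Q.TT.map (ContinuousLinearMap.apply ℂ H2 (Q.tmul ξ₁ ξ₂) : B H2 →L[ℂ] H2).toLinearMap)
  have hS : {v : H2 | ∃ t ∈ Q.TT, v = t (Q.tmul ξ₁ ξ₂)} = (S : Set H2) := by
    ext u; constructor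
    · rintro ⟨s, hs, rfl⟩; exact ⟨s, hs, rfl⟩
    · rintro ⟨s, hs, rfl⟩; exact ⟨s, hs, rfl⟩
  rw [hS]
  change Y (Q.tmul ξ₁ ξ₂) ∈ S.topologicalClosure
  have hcl : IsClosed (S.topologicalClosure : Set H2) := Submodule.isClosed_topologicalClosure _
  -- elementary tensors of cyclic vectors
  have h1 : ∀ a ∈ Q.Mhat, ∀ v ∈ Q.cyc ξ₂, Q.tmul (a ξ₁) v ∈ S.topologicalClosure := by
    intro a ha v hv
    have h : Q.cyc ξ₂ ≤ S.topologicalClosure.comap (Q.toLCQG.insL (a ξ₁)).toLinearMap := by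
      refine Submodule.topologicalClosure_minimal _ ?_ (hcl.preimage (Q.toLCQG.insL (a ξ₁)).continuous)
      rw [Submodule.span_le]
      rintro _ ⟨b, hb, rfl⟩
      refine Submodule.le_topologicalClosure _ ⟨Q.tensorOp a b, Submodule.subset_span
        ⟨a, ha, b, hb, rfl⟩, ?_⟩
      exact Q.tensorOp_apply a b ξ₁ ξ₂
    exact h hv
  have h2 : ∀ u ∈ Q.cyc ξ₁, ∀ v ∈ Q.cyc ξ₂, Q.tmul u v ∈ S.topologicalClosure := by
    intro u hu v hv
    have h : Q.cyc ξ₁ ≤ S.topologicalClosure.comap (Q.toLCQG.insR v).toLinearMap := by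
      refine Submodule.topologicalClosure_minimal _ ?_ (hcl.preimage (Q.toLCQG.insR v).continuous)
      rw [Submodule.span_le]
      rintro _ ⟨a, ha, rfl⟩
      exact h1 a ha v hv
    exact h hu
  obtain ⟨e₁, he₁, -, hf₁, hr₁⟩ := Q.exists_proj ξ₁
  obtain ⟨e₂, he₂, -, hf₂, hr₂⟩ := Q.exists_proj ξ₂
  have h3 : ∀ v : H2, Q.tensorOp e₁ e₂ v ∈ S.topologicalClosure := by
    have h : (Submodule.span ℂ {v : H2 | ∃ a b, v = Q.tmul a b}).topologicalClosure ≤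
        S.topologicalClosure.comap (Q.tensorOp e₁ e₂).toLinearMap := by
      refine Submodule.topologicalClosure_minimal _ ?_ (hcl.preimage (Q.tensorOp e₁ e₂).continuous)
      rw [Submodule.span_le]
      rintro _ ⟨a, b, rfl⟩
      change Q.tensorOp e₁ e₂ (Q.tmul a b) ∈ S.topologicalClosure
      rw [Q.tensorOp_apply]
      exact h2 _ (hr₁ a) _ (hr₂ b)
    rw [Q.tmul_total] at h
    exact fun v => h trivial
  have h4 : Commute Y (Q.tensorOp e₁ e₂) := by
    have e : Q.tensorOp e₁ e₂ = Q.tensorOp e₁ 1 * Q.tensorOp 1 e₂ := by simp [tensorOp_mul]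
    rw [e]
    exact ((Q.toLCQG.mem_AA'.1 hY).2 e₁ he₁).mul_right ((Q.toLCQG.mem_AA'.1 hY).1 e₂ he₂)
  have h5 := congrArg (fun X => X (Q.tmul ξ₁ ξ₂)) h4.eq
  simp only [mul_apply_eq_comp, Q.tensorOp_apply, hf₁, hf₂] at h5
  rw [h5]
  exact h3 _

theorem trace_AA {ξ₁ ξ₂ : H} (h₁ : Q.TV ξ₁) (h₂ : Q.TV ξ₂) {Y Z : B H2} (hY : Y ∈ Q.toLCQG.AA)
    (hZ : Z ∈ Q.toLCQG.AA) :
    ⟪Q.tmul ξ₁ ξ₂, (Y * Z) (Q.tmul ξ₁ ξ₂)⟫ = ⟪Q.tmul ξ₁ ξ₂, (Z * Y) (Q.tmul ξ₁ ξ₂)⟫ :=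
  trace_ext _ Q.TT Q.TT_star Q.toLCQG.AA Q.TT_AA (Q.TT_trace h₁ h₂) (Q.TT_cyc ξ₁ ξ₂) Y Z hY hZ

theorem trace_D₁ {ξ₁ ξ₂ : H} (h₁ : Q.TV ξ₁) (h₂ : Q.TV ξ₂) {a b z : B H} (ha : a ∈ Q.Mhat)
    (hb : b ∈ Q.Mhat) (hz : z ∈ Q.Mhat) :
    ⟪Q.tmul ξ₁ ξ₂, (Q.toLCQG.D b * (Q.tensorOp z 1 * Q.toLCQG.D a)) (Q.tmul ξ₁ ξ₂)⟫ =
      Q.phihat z * Q.phihat (a * b) := by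
  rw [Q.trace_AA h₁ h₂ (Q.D_mem hb) (mul_mem (Q.toLCQG.tensorOp_mem_AA hz (one_mem Q.Mhat))
    (Q.D_mem ha)), mul_assoc, D_mul]
  have e : Q.tensorOp z 1 = star (Q.tensorOp (star z) 1) := by simp [star_tensorOp]
  rw [mul_apply_eq_comp, e, star_inner, Q.tensorOp_apply, one_apply_eq_self,
    Q.inv_left (mul_mem ha hb) h₂, star_inner_l, h₁ z hz]

theorem trace_D₂ {ξ₁ ξ₂ : H} (h₁ : Q.TV ξ₁) (h₂ : Q.TV ξ₂) {a b z : B H} (ha : a ∈ Q.Mhat)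
    (hb : b ∈ Q.Mhat) (hz : z ∈ Q.Mhat) :
    ⟪Q.tmul ξ₁ ξ₂, (Q.toLCQG.D b * (Q.tensorOp 1 z * Q.toLCQG.D a)) (Q.tmul ξ₁ ξ₂)⟫ =
      Q.phihat z * Q.phihat (a * b) := by
  rw [Q.trace_AA h₁ h₂ (Q.D_mem hb) (mul_mem (Q.toLCQG.tensorOp_mem_AA (one_mem Q.Mhat) hz)
    (Q.D_mem ha)), mul_assoc, D_mul]
  have e : Q.tensorOp 1 z = star (Q.tensorOp 1 (star z)) := by simp [star_tensorOp]
  rw [mul_apply_eq_comp, e, star_inner, Q.tensorOp_apply, one_apply_eq_self,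
    Q.inv_right (mul_mem ha hb) h₁, star_inner_l, h₂ z hz]

/-- The second equality of the theorem. -/
theorem second_eq {a b z : B H} (ha : a ∈ Q.Mhat) (hb : b ∈ Q.Mhat) (hz : z ∈ Q.Mhat) :
    Q.toLCQG.funcTensor Q.phihat Q.phihat
        (Q.toLCQG.Deltahat b * Q.tensorOp z 1 * Q.toLCQG.Deltahat a) =
      Q.phihat z * Q.phihat (a * b) := by
  have hmem : ∀ y ∈ Q.Mhat, Q.toLCQG.Deltahat y ∈ Q.toLCQG.AA := by
    intro y hy
    have := Q.toLCQG.mem_AA.1 (Q.D_mem hy)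
    rw [mem_AA]
    exact ⟨fun d c => by rw [slL_Deltahat]; exact this.2 _ _,
      fun d c => by rw [slR_Deltahat]; exact this.1 _ _⟩
  rw [Q.funcTensor_phihat (mul_mem (mul_mem (hmem b hb) (Q.toLCQG.tensorOp_mem_AA hz
    (one_mem Q.Mhat))) (hmem a ha)), ← Q.trace_D₂ Q.TV_xi Q.TV_xi ha hb hz]
  have h := Q.toLCQG.flip_mul_flip
  have e : Q.toLCQG.Deltahat b * Q.tensorOp z 1 * Q.toLCQG.Deltahat a =
      Q.flipU * (Q.toLCQG.D b * (Q.tensorOp 1 z * Q.toLCQG.D a)) * Q.flipU := by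
    rw [Deltahat_eq, Deltahat_eq, ← Q.toLCQG.flip_tensor_flip 1 z]
    calc _ = Q.flipU * Q.toLCQG.D b * (Q.flipU * Q.flipU) * Q.tensorOp 1 z *
          (Q.flipU * Q.flipU) * Q.toLCQG.D a * Q.flipU := by simp only [mul_assoc]
      _ = _ := by rw [h]; simp only [mul_assoc, mul_one, one_mul]
  rw [e, mul_apply_eq_comp, mul_apply_eq_comp, inner_flip, Q.flipU_apply]

end DiscreteKacQG

end Trace


section Triple

set_option linter.unusedSectionVars false

variable {H H2}

open LCQG ContinuousLinearMap

/-- Hilbert sum of copies of `K` -/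
abbrev L2 (ι : Type*) (K : Type*) [NormedAddCommGroup K] : Type _ := lp (fun _ : ι => K) 2

namespace L2

variable {ι K : Type*} [NormedAddCommGroup K] [InnerProductSpace ℂ K]

theorem mem_of {f : ι → K} (h : Summable fun i => ‖f i‖ ^ 2) :
    Memℓp (E := fun _ : ι => K) f 2 := by
  refine memℓp_gen ?_
  simpa using h

theorem hasSum_norm_sq (f : L2 ι K) : HasSum (fun i => ‖f i‖ ^ 2) (‖f‖ ^ 2) := by
  have := lp.hasSum_norm (p := 2) (by simp) f
  simpa using this

/-- diagonal amplification -/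
def amp (T : B K) : B (L2 ι K) :=
  LinearMap.mkContinuous
    { toFun := fun f => ⟨fun j => T (f j), mem_of (by
        refine Summable.of_nonneg_of_le (fun _ => by positivity) (fun j => ?_)
          ((hasSum_norm_sq f).summable.mul_left (‖T‖ ^ 2))
        rw [← mul_pow]
        exact pow_le_pow_left₀ (norm_nonneg _) (T.le_opNorm _) 2)⟩
      map_add' := fun f g => by ext j; exact map_add T (f j) (g j)
      map_smul' := fun c f => by ext j; exact map_smul T c (f j) }
    ‖T‖ (fun f => by
      refine le_of_sq_le_sq ?_ (by positivity)
      refine hasSum_le (fun j => ?_) (hasSum_norm_sq _)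
        (by simpa [mul_pow] using (hasSum_norm_sq f).mul_left (‖T‖ ^ 2))
      rw [← mul_pow]
      exact pow_le_pow_left₀ (norm_nonneg _) (T.le_opNorm _) 2)

theorem amp_apply (T : B K) (f : L2 ι K) (j : ι) : amp T f j = T (f j) := rfl

variable (e : HilbertBasis ι ℂ H)

theorem hasSum_coeff (k : H) : HasSum (fun j => ‖⟪e j, k⟫‖ ^ 2) (‖k‖ ^ 2) := by
  have h := e.hasSum_inner_mul_inner k k
  rw [inner_self_eq] at h
  have h2 : (fun j => ⟪k, e j⟫ * ⟪e j, k⟫) = fun j => ((‖⟪e j, k⟫‖ ^ 2 : ℝ) : ℂ) := by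
    funext j
    rw [← aux_conj_mul, inner_conj_symm]
  rw [h2] at h
  exact_mod_cast h

/-- `v ↦ k ⊗ v` -/
def ins (k : H) : K →L[ℂ] L2 ι K :=
  LinearMap.mkContinuous
    { toFun := fun v => ⟨fun j => ⟪e j, k⟫ • v, mem_of (by
        simpa [norm_smul, mul_pow] using (hasSum_coeff e k).summable.mul_right (‖v‖ ^ 2))⟩
      map_add' := fun f g => by ext j; exact smul_add ⟪e j, k⟫ f g
      map_smul' := fun c f => by ext j; exact smul_comm ⟪e j, k⟫ c f }
    ‖k‖ (fun v => by
      refine le_of_sq_le_sq ?_ (by positivity)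
      refine hasSum_le (fun j => ?_) (hasSum_norm_sq _)
        (by simpa [mul_pow] using (hasSum_coeff e k).mul_right (‖v‖ ^ 2))
      simp [norm_smul, mul_pow])

theorem ins_apply (k : H) (v : K) (j : ι) : ins e k v j = ⟪e j, k⟫ • v := rfl

theorem amp_ins (T : B K) (k : H) (v : K) : amp T (ins e k v) = ins e k (T v) := by
  ext j; simp [amp_apply, ins_apply]

theorem ins_inner (a b : H) (v w : K) : ⟪ins e a v, ins e b w⟫ = ⟪a, b⟫ * ⟪v, w⟫ := by
  have h1 := lp.hasSum_inner (𝕜 := ℂ) (ins e a v) (ins e b w)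
  have h2 := (e.hasSum_inner_mul_inner a b).mul_right ⟪v, w⟫
  have h3 : (fun j => ⟪ins e a v j, ins e b w j⟫) = fun j => ⟪a, e j⟫ * ⟪e j, b⟫ * ⟪v, w⟫ := by
    funext j
    rw [ins_apply, ins_apply, inner_smul_left, inner_smul_right, inner_conj_symm, mul_assoc]
  rw [h3] at h1
  exact h1.unique h2

theorem ins_basis_inner (j : ι) (v : K) (f : L2 ι K) : ⟪ins e (e j) v, f⟫ = ⟪v, f j⟫ := by
  classical
  have h1 := lp.hasSum_inner (𝕜 := ℂ) (ins e (e j) v) f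
  have h := orthonormal_iff_ite.1 e.orthonormal
  have h3 : (fun i => ⟪ins e (e j) v i, f i⟫) = fun i => if i = j then ⟪v, f j⟫ else 0 := by
    funext i
    rw [ins_apply, h]
    split_ifs with hij
    · rw [hij]; simp
    · simp
  rw [h3] at h1
  exact h1.unique (hasSum_ite_eq j ⟪v, f j⟫)

theorem adj_ins [CompleteSpace K] (j : ι) (f : L2 ι K) :
    adjoint (ins e (e j) : K →L[ℂ] L2 ι K) f = f j := by
  refine ext_inner_left ℂ fun v => ?_
  rw [adjoint_inner_right, ins_basis_inner]

end L2

/-- A model of the triple tensor product. -/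
structure Tri (Q : LCQG H H2) (ι : Type*) (K : Type*) [NormedAddCommGroup K]
    [InnerProductSpace ℂ K] [CompleteSpace K] where
  e : HilbertBasis ι ℂ H
  i1 : H → H2 →L[ℂ] K
  i3 : H → H2 →L[ℂ] K
  i1_i3 : ∀ a b c, i1 a (Q.tmul b c) = i3 c (Q.tmul a b)
  i1_inner : ∀ a b v w, ⟪i1 a v, i1 b w⟫ = ⟪a, b⟫ * ⟪v, w⟫
  i3_inner : ∀ a b v w, ⟪i3 a v, i3 b w⟫ = ⟪a, b⟫ * ⟪v, w⟫
  amp12 : B H2 → B K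
  amp23 : B H2 → B K
  amp23_i1 : ∀ T k v, amp23 T (i1 k v) = i1 k (T v)
  amp12_i3 : ∀ T k v, amp12 T (i3 k v) = i3 k (T v)
  pars1 : ∀ f g, HasSum (fun j => ⟪adjoint (i1 (e j)) f, adjoint (i1 (e j)) g⟫) ⟪f, g⟫
  pars3 : ∀ f g, HasSum (fun j => ⟪adjoint (i3 (e j)) f, adjoint (i3 (e j)) g⟫) ⟪f, g⟫

section mk

variable (Q : LCQG H H2) {ι : Type*} (e : HilbertBasis ι ℂ H)

theorem u3_inner (a b c a' b' c' : H) :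
    ⟪(L2.ins e a (Q.tmul b c) : L2 ι H2), L2.ins e a' (Q.tmul b' c')⟫ =
      ⟪a, a'⟫ * (⟪b, b'⟫ * ⟪c, c'⟫) := by
  rw [L2.ins_inner, Q.tmul_inner]

theorem u3_orth (σ : ι × ι × ι ≃ ι × ι × ι) : Orthonormal ℂ
    (fun p => (L2.ins e (e (σ p).1) (Q.tmul (e (σ p).2.1) (e (σ p).2.2)) : L2 ι H2)) := by
  classical
  rw [orthonormal_iff_ite]
  intro p q
  have h := orthonormal_iff_ite.1 e.orthonormal
  rw [u3_inner, h, h, h]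
  by_cases hpq : p = q
  · simp [hpq]
  · have : σ p ≠ σ q := fun h => hpq (σ.injective h)
    rw [if_neg hpq]
    by_contra hne
    apply this
    refine Prod.ext ?_ (Prod.ext ?_ ?_)
    · by_contra h1; simp [h1] at hne
    · by_contra h1; simp [h1] at hne
    · by_contra h1; simp [h1] at hne

theorem u3_ext {f g : L2 ι H2} (h : ∀ i j k, ⟪(L2.ins e (e i) (Q.tmul (e j) (e k)) : L2 ι H2), f⟫ =
    ⟪(L2.ins e (e i) (Q.tmul (e j) (e k)) : L2 ι H2), g⟫) : f = g := by
  ext i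
  refine basis_ext (Q.basis2 e) fun p => ?_
  have := h i p.1 p.2
  rw [L2.ins_basis_inner, L2.ins_basis_inner] at this
  simpa using this

def u3 (σ : ι × ι × ι ≃ ι × ι × ι) : HilbertBasis (ι × ι × ι) ℂ (L2 ι H2) :=
  HilbertBasis.mkOfOrthogonalEqBot (u3_orth Q e σ) (by
    rw [Submodule.eq_bot_iff]
    intro v hv
    refine u3_ext Q e fun i j k => ?_
    rw [inner_zero_right]
    refine (Submodule.mem_orthogonal _ v).1 hv _ (Submodule.subset_span ⟨σ.symm (i, j, k), ?_⟩)
    simp)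

theorem u3_apply (σ : ι × ι × ι ≃ ι × ι × ι) (p : ι × ι × ι) :
    u3 Q e σ p = L2.ins e (e (σ p).1) (Q.tmul (e (σ p).2.1) (e (σ p).2.2)) := by
  simp [u3]

/-- cyclic permutation -/
def cycP (ι : Type*) : ι × ι × ι ≃ ι × ι × ι where
  toFun p := (p.2.2, p.1, p.2.1)
  invFun p := (p.2.1, p.2.2, p.1)
  left_inv _ := rfl
  right_inv _ := rfl

/-- cyclic permutation of legs -/
def CC : L2 ι H2 ≃ₗᵢ[ℂ] L2 ι H2 :=
  (u3 Q e (Equiv.refl _)).repr.trans (u3 Q e (cycP ι)).repr.symm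

theorem CC_apply (a b c : H) : CC Q e (L2.ins e a (Q.tmul b c)) = L2.ins e c (Q.tmul a b) := by
  classical
  refine u3_ext Q e fun i j k => ?_
  have h1 : (L2.ins e (e i) (Q.tmul (e j) (e k)) : L2 ι H2) =
      CC Q e (L2.ins e (e j) (Q.tmul (e k) (e i))) := by
    have h2 := u3_apply Q e (Equiv.refl _) (j, k, i)
    have h3 := u3_apply Q e (cycP ι) (j, k, i)
    simp only [Equiv.refl_apply] at h2
    rw [← h2]
    rw [CC, LinearIsometryEquiv.trans_apply, HilbertBasis.repr_self, HilbertBasis.repr_symm_single,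
      h3]
    rfl
  rw [u3_inner]
  rw [h1, LinearIsometryEquiv.inner_map_map, u3_inner]
  ring

theorem CC_symm_inner (f g : L2 ι H2) : ⟪(CC Q e).symm f, g⟫ = ⟪f, CC Q e g⟫ := by
  rw [← (CC Q e).inner_map_map, LinearIsometryEquiv.apply_symm_apply]

/-- The concrete triple tensor product. -/
def mkTri : Tri Q ι (L2 ι H2) where
  e := e
  i1 k := L2.ins e k
  i3 k := ((CC Q e).symm.toContinuousLinearEquiv : L2 ι H2 →L[ℂ] L2 ι H2) ∘L L2.ins e k
  i1_i3 a b c := by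
    change _ = (CC Q e).symm _
    rw [LinearIsometryEquiv.eq_symm_apply]
    exact CC_apply Q e a b c
  i1_inner := L2.ins_inner e
  i3_inner a b v w := by
    change ⟪(CC Q e).symm _, (CC Q e).symm _⟫ = _
    rw [LinearIsometryEquiv.inner_map_map]
    exact L2.ins_inner e a b v w
  amp23 T := L2.amp T
  amp12 T := ((CC Q e).symm.toContinuousLinearEquiv : L2 ι H2 →L[ℂ] L2 ι H2) ∘L L2.amp T ∘L
    ((CC Q e).toContinuousLinearEquiv : L2 ι H2 →L[ℂ] L2 ι H2)
  amp23_i1 := L2.amp_ins e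
  amp12_i3 T k v := by
    change (CC Q e).symm (L2.amp T (CC Q e ((CC Q e).symm _))) = (CC Q e).symm _
    rw [LinearIsometryEquiv.apply_symm_apply]
    congr 1
    exact L2.amp_ins e T k v
  pars1 f g := by
    simp only [L2.adj_ins]
    exact lp.hasSum_inner f g
  pars3 f g := by
    have h : ∀ j f, adjoint (((CC Q e).symm.toContinuousLinearEquiv : L2 ι H2 →L[ℂ] L2 ι H2) ∘L
        L2.ins e (e j)) f = (CC Q e f) j := by
      intro j f
      refine ext_inner_left ℂ fun v => ?_
      rw [adjoint_inner_right]
      change ⟪(CC Q e).symm (L2.ins e (e j) v), f⟫ = _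
      rw [CC_symm_inner, L2.ins_basis_inner]
    simp only [h]
    rw [← (CC Q e).inner_map_map]
    exact lp.hasSum_inner _ _

end mk

end Triple


section TripleOps

set_option linter.unusedSectionVars false

variable {H H2}

open LCQG ContinuousLinearMap

namespace Tri

variable {Q : LCQG H H2} {ι K : Type*} [NormedAddCommGroup K] [InnerProductSpace ℂ K]
  [CompleteSpace K] (τ : Tri Q ι K)

theorem vec_ext1 {f g : K} (h : ∀ a, adjoint (τ.i1 a) f = adjoint (τ.i1 a) g) : f = g := by
  have h1 := τ.pars1 (f - g) (f - g)
  have h2 : (fun j => ⟪adjoint (τ.i1 (τ.e j)) (f - g), adjoint (τ.i1 (τ.e j)) (f - g)⟫) =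
      fun _ => (0 : ℂ) := by
    funext j
    rw [map_sub, h, sub_self, inner_zero_left]
  rw [h2] at h1
  exact sub_eq_zero.1 (inner_self_eq_zero.1 (h1.unique hasSum_zero))

theorem vec_ext3 {f g : K} (h : ∀ a, adjoint (τ.i3 a) f = adjoint (τ.i3 a) g) : f = g := by
  have h1 := τ.pars3 (f - g) (f - g)
  have h2 : (fun j => ⟪adjoint (τ.i3 (τ.e j)) (f - g), adjoint (τ.i3 (τ.e j)) (f - g)⟫) =
      fun _ => (0 : ℂ) := by
    funext j
    rw [map_sub, h, sub_self, inner_zero_left]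
  rw [h2] at h1
  exact sub_eq_zero.1 (inner_self_eq_zero.1 (h1.unique hasSum_zero))

theorem op_ext1 {X Y : B K} (h : ∀ a v, X (τ.i1 a v) = Y (τ.i1 a v)) : X = Y := by
  have : star X = star Y := by
    refine ContinuousLinearMap.ext fun f => τ.vec_ext1 fun a => ext_inner_left ℂ fun v => ?_
    rw [adjoint_inner_right, adjoint_inner_right, star_inner, star_inner, h]
  exact star_injective this

theorem op_ext3 {X Y : B K} (h : ∀ a v, X (τ.i3 a v) = Y (τ.i3 a v)) : X = Y := by
  have : star X = star Y := by
    refine ContinuousLinearMap.ext fun f => τ.vec_ext3 fun a => ext_inner_left ℂ fun v => ?_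
    rw [adjoint_inner_right, adjoint_inner_right, star_inner, star_inner, h]
  exact star_injective this

theorem amp23_mul (S T : B H2) : τ.amp23 S * τ.amp23 T = τ.amp23 (S * T) :=
  τ.op_ext1 fun a v => by simp [τ.amp23_i1]

theorem amp12_mul (S T : B H2) : τ.amp12 S * τ.amp12 T = τ.amp12 (S * T) :=
  τ.op_ext3 fun a v => by simp [τ.amp12_i3]

@[simp] theorem amp23_one : τ.amp23 1 = 1 :=
  τ.op_ext1 fun a v => by simp [τ.amp23_i1]

@[simp] theorem amp12_one : τ.amp12 1 = 1 :=
  τ.op_ext3 fun a v => by simp [τ.amp12_i3]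

theorem amp23_star (T : B H2) : star (τ.amp23 T) = τ.amp23 (star T) := by
  refine τ.op_ext1 fun a v => τ.vec_ext1 fun b => ext_inner_left ℂ fun w => ?_
  rw [adjoint_inner_right, adjoint_inner_right, star_inner, τ.amp23_i1, τ.amp23_i1, τ.i1_inner,
    τ.i1_inner, star_inner]

theorem amp12_star (T : B H2) : star (τ.amp12 T) = τ.amp12 (star T) := by
  refine τ.op_ext3 fun a v => τ.vec_ext3 fun b => ext_inner_left ℂ fun w => ?_
  rw [adjoint_inner_right, adjoint_inner_right, star_inner, τ.amp12_i3, τ.amp12_i3, τ.i3_inner,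
    τ.i3_inner, star_inner]

theorem adj1_amp (T : B H2) (k : H) (f : K) :
    adjoint (τ.i1 k) (τ.amp23 T f) = T (adjoint (τ.i1 k) f) := by
  refine ext_inner_left ℂ fun w => ?_
  rw [adjoint_inner_right, ← star_inner_l, amp23_star, τ.amp23_i1, ← adjoint_inner_right,
    star_inner_l]

theorem adj3_amp (T : B H2) (k : H) (f : K) :
    adjoint (τ.i3 k) (τ.amp12 T f) = T (adjoint (τ.i3 k) f) := by
  refine ext_inner_left ℂ fun w => ?_
  rw [adjoint_inner_right, ← star_inner_l, amp12_star, τ.amp12_i3, ← adjoint_inner_right,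
    star_inner_l]

/-- elementary tensors -/
def t3 (a b c : H) : K := τ.i1 a (Q.tmul b c)

theorem i1_t (a b c : H) : τ.i1 a (Q.tmul b c) = τ.t3 a b c := rfl

theorem i3_t (a b c : H) : τ.i3 c (Q.tmul a b) = τ.t3 a b c := (τ.i1_i3 a b c).symm

theorem t3_inner (a b c a' b' c' : H) :
    ⟪τ.t3 a b c, τ.t3 a' b' c'⟫ = ⟪a, a'⟫ * (⟪b, b'⟫ * ⟪c, c'⟫) := by
  rw [t3, t3, τ.i1_inner, Q.tmul_inner]

theorem op_ext {X Y : B K} (h : ∀ a b c, X (τ.t3 a b c) = Y (τ.t3 a b c)) : X = Y := by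
  refine τ.op_ext1 fun a v => ?_
  have : X ∘L τ.i1 a = Y ∘L τ.i1 a := Q.ext_op fun b c => h a b c
  exact congrArg (fun T => T v) this

theorem vec_ext {f g : K} (h : ∀ a b c, ⟪τ.t3 a b c, f⟫ = ⟪τ.t3 a b c, g⟫) : f = g := by
  refine τ.vec_ext1 fun a => Q.ext_vec fun b c => ?_
  rw [adjoint_inner_right, adjoint_inner_right]
  exact h a b c

theorem amp12_t (x y : B H) (a b c : H) :
    τ.amp12 (Q.tensorOp x y) (τ.t3 a b c) = τ.t3 (x a) (y b) c := by
  rw [← i3_t, τ.amp12_i3, Q.tensorOp_apply, i3_t]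

theorem amp23_t (x y : B H) (a b c : H) :
    τ.amp23 (Q.tensorOp x y) (τ.t3 a b c) = τ.t3 a (x b) (y c) := by
  rw [← i1_t, τ.amp23_i1, Q.tensorOp_apply, i1_t]

/-- operator on the middle leg -/
def m2 (y : B H) : B K := τ.amp12 (Q.tensorOp 1 y)

theorem m2_eq (y : B H) : τ.m2 y = τ.amp23 (Q.tensorOp y 1) :=
  τ.op_ext fun a b c => by rw [m2, amp12_t, amp23_t]; rfl

theorem m2_t (y : B H) (a b c : H) : τ.m2 y (τ.t3 a b c) = τ.t3 a (y b) c := by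
  rw [m2, amp12_t]; rfl

theorem m2_star (y : B H) : star (τ.m2 y) = τ.m2 (star y) := by
  rw [m2, amp12_star, star_tensorOp, star_one, m2]

theorem m2_mul (y z : B H) : τ.m2 y * τ.m2 z = τ.m2 (y * z) := by
  rw [m2, m2, amp12_mul, tensorOp_mul, one_mul, m2]

theorem amp23_i3 (y : B H) (c : H) (v : H2) :
    τ.amp23 (Q.tensorOp 1 y) (τ.i3 c v) = τ.i3 (y c) v := by
  have : τ.amp23 (Q.tensorOp 1 y) ∘L τ.i3 c = τ.i3 (y c) := Q.ext_op fun a b => by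
    rw [comp_apply, i3_t, amp23_t, i3_t]; rfl
  exact congrArg (fun T => T v) this

theorem commute_leg3 (T : B H2) (y : B H) : Commute (τ.amp12 T) (τ.amp23 (Q.tensorOp 1 y)) :=
  τ.op_ext3 fun c v => by
    rw [mul_apply_eq_comp, mul_apply_eq_comp, amp23_i3, τ.amp12_i3, τ.amp12_i3, amp23_i3]

/-- slice of the first leg -/
def sl1 (X : B K) (d c : H) : B H2 := adjoint (τ.i1 d) ∘L X ∘L τ.i1 c

/-- slice of the third leg -/
def sl3 (X : B K) (d c : H) : B H2 := adjoint (τ.i3 d) ∘L X ∘L τ.i3 c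

theorem sl1_apply (X : B K) (d c : H) (v : H2) :
    τ.sl1 X d c v = adjoint (τ.i1 d) (X (τ.i1 c v)) := rfl

theorem sl3_apply (X : B K) (d c : H) (v : H2) :
    τ.sl3 X d c v = adjoint (τ.i3 d) (X (τ.i3 c v)) := rfl

theorem sl1_ext {X Y : B K} (h : ∀ d c, τ.sl1 X d c = τ.sl1 Y d c) : X = Y :=
  τ.op_ext1 fun c v => τ.vec_ext1 fun d => congrArg (fun T => T v) (h d c)

theorem sl3_ext {X Y : B K} (h : ∀ d c, τ.sl3 X d c = τ.sl3 Y d c) : X = Y :=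
  τ.op_ext3 fun c v => τ.vec_ext3 fun d => congrArg (fun T => T v) (h d c)

theorem sl1_left (T : B H2) (X : B K) (d c : H) : τ.sl1 (τ.amp23 T * X) d c = T * τ.sl1 X d c := by
  ext v
  rw [sl1_apply, mul_apply_eq_comp, adj1_amp, mul_apply_eq_comp, sl1_apply]

theorem sl1_right (T : B H2) (X : B K) (d c : H) :
    τ.sl1 (X * τ.amp23 T) d c = τ.sl1 X d c * T := by
  ext v
  rw [sl1_apply, mul_apply_eq_comp, τ.amp23_i1, mul_apply_eq_comp, sl1_apply]

theorem sl3_left (T : B H2) (X : B K) (d c : H) : τ.sl3 (τ.amp12 T * X) d c = T * τ.sl3 X d c := by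
  ext v
  rw [sl3_apply, mul_apply_eq_comp, adj3_amp, mul_apply_eq_comp, sl3_apply]

theorem sl3_right (T : B H2) (X : B K) (d c : H) :
    τ.sl3 (X * τ.amp12 T) d c = τ.sl3 X d c * T := by
  ext v
  rw [sl3_apply, mul_apply_eq_comp, τ.amp12_i3, mul_apply_eq_comp, sl3_apply]

theorem sl3_amp23 (T : B H2) (d c : H) : τ.sl3 (τ.amp23 T) d c = Q.tensorOp 1 (Q.slR T d c) :=
  Q.ext_sesq fun a b a' b' => by
    rw [sl3_apply, adjoint_inner_right, i3_t, i3_t, t3, t3, τ.amp23_i1, τ.i1_inner,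
      Q.tensorOp_apply, Q.tmul_inner, inner_slR]
    rfl

theorem sl1_amp12 (T : B H2) (d c : H) : τ.sl1 (τ.amp12 T) d c = Q.tensorOp (Q.slL T d c) 1 :=
  Q.ext_sesq fun a b a' b' => by
    rw [sl1_apply, adjoint_inner_right, i1_t, i1_t, ← i3_t, ← i3_t, τ.amp12_i3, τ.i3_inner,
      Q.tensorOp_apply, Q.tmul_inner, inner_slL, mul_comm]
    rfl

/-- `W₂₃ W₁₂ W₂₃*` -/
def X : B K := τ.amp23 Q.W * τ.amp12 Q.W * τ.amp23 (star Q.W)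

/-- `W₁₂* W₂₃ W₁₂ W₂₃*` -/
def Z : B K := τ.amp12 (star Q.W) * τ.X

theorem sl1_X (d c : H) : τ.sl1 τ.X d c = Q.D (Q.w d c) := by
  rw [X, sl1_right, sl1_left, sl1_amp12]; rfl

theorem W12_l : τ.amp12 (star Q.W) * τ.amp12 Q.W = 1 := by
  rw [amp12_mul, Q.W_unitary_l, amp12_one]

theorem W12_r : τ.amp12 Q.W * τ.amp12 (star Q.W) = 1 := by
  rw [amp12_mul, Q.W_unitary_r, amp12_one]

theorem W23_l : τ.amp23 (star Q.W) * τ.amp23 Q.W = 1 := by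
  rw [amp23_mul, Q.W_unitary_l, amp23_one]

theorem W23_r : τ.amp23 Q.W * τ.amp23 (star Q.W) = 1 := by
  rw [amp23_mul, Q.W_unitary_r, amp23_one]

theorem star_X : star τ.X = τ.amp23 Q.W * τ.amp12 (star Q.W) * τ.amp23 (star Q.W) := by
  rw [X, star_mul, star_mul, amp23_star, amp23_star, amp12_star, star_star, mul_assoc]

theorem star_Z : star τ.Z = star τ.X * τ.amp12 Q.W := by
  rw [Z, star_mul, amp12_star, star_star]

theorem X_l : star τ.X * τ.X = 1 := by
  rw [star_X, X]
  calc _ = τ.amp23 Q.W * τ.amp12 (star Q.W) * (τ.amp23 (star Q.W) * τ.amp23 Q.W) * τ.amp12 Q.W *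
      τ.amp23 (star Q.W) := by simp only [mul_assoc]
    _ = τ.amp23 Q.W * (τ.amp12 (star Q.W) * τ.amp12 Q.W) * τ.amp23 (star Q.W) := by
      rw [W23_l]; simp only [mul_assoc, one_mul]
    _ = 1 := by rw [W12_l, mul_one, W23_r]

theorem X_r : τ.X * star τ.X = 1 := by
  rw [star_X, X]
  calc _ = τ.amp23 Q.W * τ.amp12 Q.W * (τ.amp23 (star Q.W) * τ.amp23 Q.W) * τ.amp12 (star Q.W) *
      τ.amp23 (star Q.W) := by simp only [mul_assoc]
    _ = τ.amp23 Q.W * (τ.amp12 Q.W * τ.amp12 (star Q.W)) * τ.amp23 (star Q.W) := by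
      rw [W23_l]; simp only [mul_assoc, one_mul]
    _ = 1 := by rw [W12_r, mul_one, W23_r]

theorem X_eq : τ.X = τ.amp12 Q.W * τ.Z := by
  rw [Z, ← mul_assoc, W12_r, one_mul]

theorem Z_l : star τ.Z * τ.Z = 1 := by
  rw [star_Z, Z, mul_assoc, ← mul_assoc (τ.amp12 Q.W), W12_r, one_mul, X_l]

theorem Z_r : τ.Z * star τ.Z = 1 := by
  rw [star_Z, Z, mul_assoc, ← mul_assoc τ.X, X_r, one_mul, W12_l]

theorem Z_M {m' : B H} (hm : m' ∈ Q.M.commutant) : Commute τ.Z (τ.m2 m') := by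
  have h1 : Commute (τ.amp23 (star Q.W)) (τ.m2 m') := by
    rw [m2_eq]
    have h := Q.W_mem (star m') (star_mem hm) 1 (one_mem _)
    have h' := h.star_star
    rw [star_tensorOp, star_star, star_one] at h'
    rw [Commute, SemiconjBy, amp23_mul, amp23_mul, h'.eq]
  have h2 : Commute (τ.amp12 (star Q.W) * (τ.amp23 Q.W * τ.amp12 Q.W)) (τ.m2 m') := by
    refine τ.sl3_ext fun d c => ?_
    simp only [m2, sl3_right, sl3_left, sl3_amp23]
    have := Q.Delta_mem _ (Q.x_mem d c) 1 (one_mem _) m' hm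
    rw [mul_assoc] at this
    exact this.eq
  have : τ.Z = τ.amp12 (star Q.W) * (τ.amp23 Q.W * τ.amp12 Q.W) * τ.amp23 (star Q.W) := by
    simp only [Z, X, mul_assoc]
  rw [this]
  exact h2.mul_left h1

end Tri

namespace DiscreteKacQG

variable (Q : DiscreteKacQG H H2) {ι K : Type*} [NormedAddCommGroup K] [InnerProductSpace ℂ K]
  [CompleteSpace K] (τ : Tri Q.toLCQG ι K)

theorem X_A2 {a' : B H} (ha : a' ∈ Q.Mhat.commutant) : Commute τ.X (τ.m2 a') := by
  refine τ.sl1_ext fun d c => ?_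
  rw [τ.m2_eq, τ.sl1_right, τ.sl1_left, τ.sl1_X]
  exact ((Q.toLCQG.mem_AA'.1 (Q.D_mem (Q.toLCQG.w_mem d c))).2 a' ha).eq

theorem X_A3 {a' : B H} (ha : a' ∈ Q.Mhat.commutant) :
    Commute τ.X (τ.amp23 (Q.tensorOp 1 a')) := by
  refine τ.sl1_ext fun d c => ?_
  rw [τ.sl1_right, τ.sl1_left, τ.sl1_X]
  exact ((Q.toLCQG.mem_AA'.1 (Q.D_mem (Q.toLCQG.w_mem d c))).1 a' ha).eq

theorem Z_A2 {a' : B H} (ha : a' ∈ Q.Mhat.commutant) : Commute τ.Z (τ.m2 a') := by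
  refine Commute.mul_left ?_ (Q.X_A2 τ ha)
  have h := (Q.W_mem 1 (one_mem _) (star a') (star_mem ha)).star_star
  rw [star_tensorOp, star_star, star_one] at h
  rw [Tri.m2, Commute, SemiconjBy, τ.amp12_mul, τ.amp12_mul, h.eq]

theorem Z_A3 {a' : B H} (ha : a' ∈ Q.Mhat.commutant) :
    Commute τ.Z (τ.amp23 (Q.tensorOp 1 a')) :=
  Commute.mul_left (τ.commute_leg3 _ _) (Q.X_A3 τ ha)

/-- middle slice -/
def smid (Y : B K) (p r q s : H) : B H :=
  adjoint (τ.i1 p ∘L Q.toLCQG.insR r) ∘L Y ∘L (τ.i1 q ∘L Q.toLCQG.insR s)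

theorem inner_smid (Y : B K) (p r q s b b' : H) :
    ⟪b, Q.smid τ Y p r q s b'⟫ = ⟪τ.t3 p b r, Y (τ.t3 q b' s)⟫ := by
  rw [smid, comp_apply, adjoint_inner_right]; rfl

theorem smid_commute {Y : B K} {y : B H} (h : Commute Y (τ.m2 y)) (p r q s : H) :
    Commute (Q.smid τ Y p r q s) y := by
  refine ext_B fun b b' => ?_
  rw [mul_apply_eq_comp, mul_apply_eq_comp, inner_smid, ← τ.m2_t, ← mul_apply_eq_comp, h.eq,
    mul_apply_eq_comp, ← star_inner_l, τ.m2_star, τ.m2_t, ← inner_smid, star_inner_l]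

theorem Z_all (y : B H) : Commute τ.Z (τ.m2 y) := by
  have hs : ∀ p r q s, ∃ c : ℂ, Q.smid τ τ.Z p r q s = c • (1 : B H) := by
    intro p r q s
    refine ⟨_, Q.scalar_of_mem (mem_of_commute fun m' hm => ?_) (mem_of_commute fun a' ha => ?_)⟩
    · exact Q.smid_commute τ (τ.Z_M hm) p r q s
    · exact Q.smid_commute τ (Q.Z_A2 τ ha) p r q s
  refine τ.op_ext fun q b' s => τ.vec_ext fun p b r => ?_
  rw [mul_apply_eq_comp, mul_apply_eq_comp, τ.m2_t, ← star_inner_l (τ.m2 y), τ.m2_star, τ.m2_t,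
    ← inner_smid, ← inner_smid]
  obtain ⟨c, hc⟩ := hs p r q s
  rw [hc, smul_apply, smul_apply, inner_smul_right, inner_smul_right, one_apply_eq_self,
    one_apply_eq_self, star_inner_l]

end DiscreteKacQG

end TripleOps


section Bounds

set_option linter.unusedSectionVars false

variable {H H2}

open LCQG ContinuousLinearMap

theorem Tri.star_sl1 {Q : LCQG H H2} {ι K : Type*} [NormedAddCommGroup K] [InnerProductSpace ℂ K]
    [CompleteSpace K] (τ : Tri Q ι K) (X : B K) (d c : H) :
    star (τ.sl1 X d c) = τ.sl1 (star X) c d := by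
  refine ext_B fun p q => ?_
  rw [star_inner, τ.sl1_apply, τ.sl1_apply, adjoint_inner_right, adjoint_inner_left, star_inner]

namespace DiscreteKacQG

variable (Q : DiscreteKacQG H H2) {ι K : Type*} [NormedAddCommGroup K] [InnerProductSpace ℂ K]
  [CompleteSpace K]

theorem norm_xi : ‖Q.xi‖ = 1 := by
  have := Q.TV_norm Q.TV_xi
  rw [inner_self_eq] at this
  have h : ‖Q.xi‖ ^ 2 = 1 := by exact_mod_cast this
  exact (pow_eq_one_iff_of_nonneg (norm_nonneg _) two_ne_zero).1 h

theorem W_norm (v : H2) : ‖Q.W v‖ = ‖v‖ := by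
  have h : ⟪Q.W v, Q.W v⟫ = ⟪v, v⟫ := by
    rw [← star_inner, ← mul_apply_eq_comp, Q.W_unitary_l, one_apply_eq_self]
  rw [inner_self_eq, inner_self_eq] at h
  have h' : ‖Q.W v‖ ^ 2 = ‖v‖ ^ 2 := by exact_mod_cast h
  exact (pow_left_inj₀ (norm_nonneg _) (norm_nonneg _) two_ne_zero).1 h'

theorem Wstar_inner (v w : H2) : ⟪(star Q.W) v, (star Q.W) w⟫ = ⟪v, w⟫ := by
  rw [star_inner_l, ← mul_apply_eq_comp, Q.W_unitary_r, one_apply_eq_self]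

/-- step (iii) -/
theorem step3 (τ : Tri Q.toLCQG ι K) {y : B H} (hy : y ∈ Q.Mhat) (k l : H) :
    ⟪(star Q.W) (Q.tmul k Q.xi), Q.tensorOp 1 y ((star Q.W) (Q.tmul l Q.xi))⟫ =
      ⟪k, l⟫ * Q.phihat y := by
  have hxi := Q.TV_norm Q.TV_xi
  have e1 : τ.X * τ.m2 y * star τ.X = τ.amp12 (Q.W * Q.tensorOp 1 y * star Q.W) := by
    have h : τ.X * τ.m2 y * star τ.X =
        τ.amp12 Q.W * (τ.Z * τ.m2 y) * star τ.Z * τ.amp12 (star Q.W) := by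
      rw [τ.X_eq, star_mul, τ.amp12_star]; simp only [mul_assoc]
    rw [h, (Q.Z_all τ y).eq]
    have h2 : τ.amp12 Q.W * (τ.m2 y * τ.Z) * star τ.Z * τ.amp12 (star Q.W) =
        τ.amp12 Q.W * τ.m2 y * (τ.Z * star τ.Z) * τ.amp12 (star Q.W) := by simp only [mul_assoc]
    rw [h2, τ.Z_r, mul_one, Tri.m2, τ.amp12_mul, τ.amp12_mul]
  have e2 : ⟪τ.t3 k Q.xi Q.xi, (τ.X * τ.m2 y * star τ.X) (τ.t3 l Q.xi Q.xi)⟫ =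
      ⟪(star Q.W) (Q.tmul k Q.xi), Q.tensorOp 1 y ((star Q.W) (Q.tmul l Q.xi))⟫ := by
    rw [e1, ← τ.i3_t, ← τ.i3_t, τ.amp12_i3, τ.i3_inner, hxi, one_mul, star_inner_l]
    rfl
  rw [← e2]
  have e3 : ⟪τ.t3 k Q.xi Q.xi, (τ.X * τ.m2 y * star τ.X) (τ.t3 l Q.xi Q.xi)⟫ =
      ⟪(star τ.X) (τ.t3 k Q.xi Q.xi), τ.m2 y ((star τ.X) (τ.t3 l Q.xi Q.xi))⟫ := by
    rw [star_inner_l]; rfl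
  rw [e3]
  have h1 := τ.pars1 ((star τ.X) (τ.t3 k Q.xi Q.xi)) (τ.m2 y ((star τ.X) (τ.t3 l Q.xi Q.xi)))
  have h2 := (Q.toLCQG.parsevalL τ.e ((star Q.W) (Q.tmul k Q.xi))
    ((star Q.W) (Q.tmul l Q.xi))).mul_right (Q.phihat y)
  rw [Q.Wstar_inner, Q.tmul_inner, hxi, mul_one] at h2
  refine h1.unique ?_
  refine (congrArg (fun f => HasSum f (⟪k, l⟫ * Q.phihat y)) (funext fun j => ?_)).mp h2
  have hs : ∀ m : H, adjoint (τ.i1 (τ.e j)) ((star τ.X) (τ.t3 m Q.xi Q.xi)) =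
      Q.toLCQG.D (star (Q.toLCQG.w m (τ.e j))) (Q.tmul Q.xi Q.xi) := by
    intro m
    rw [← τ.i1_t, ← τ.sl1_apply, ← τ.star_sl1, τ.sl1_X, star_D]
  have hw : ∀ m : H, adjoint (Q.toLCQG.insL (τ.e j)) ((star Q.W) (Q.tmul m Q.xi)) =
      (star (Q.toLCQG.w m (τ.e j))) Q.xi := by
    intro m
    rw [adj_insL_apply, w, star_slL]
  rw [τ.m2_eq, τ.adj1_amp, hs, hs, hw, hw]
  have hk := Q.toLCQG.w_mem k (τ.e j)
  have hl := Q.toLCQG.w_mem l (τ.e j)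
  have := Q.trace_D₁ Q.TV_xi Q.TV_xi (star_mem hl) hk hy
  rw [Q.inner_xi (star_mem hk) (star_mem hl), star_star,
    Q.phihat_tracial _ hk _ (star_mem hl), mul_comm, ← this, ← star_D _ (Q.toLCQG.w k (τ.e j)),
    star_inner_l]
  rfl

theorem adjL_W (y : B H) (d c : H) :
    adjoint (Q.toLCQG.insL d) (Q.tensorOp 1 y (Q.W (Q.tmul c Q.xi))) =
      y (Q.toLCQG.w d c Q.xi) := by
  have := Q.toLCQG.slL_mul_left Q.W y d c
  have h := congrArg (fun T => T Q.xi) this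
  exact h

theorem hasSum_norm_sqL (e : HilbertBasis ι ℂ H) (v : H2) :
    HasSum (fun i => ‖adjoint (Q.toLCQG.insL (e i)) v‖ ^ 2) (‖v‖ ^ 2) := by
  have h := Q.toLCQG.parsevalL e v v
  simp only [inner_self_eq] at h
  exact_mod_cast h

/-- step (iv) -/
theorem step4 (τ : Tri Q.toLCQG ι K) {y : B H} (hy : y ∈ Q.Mhat) (c : H) :
    ‖Q.tensorOp 1 y (Q.W (Q.tmul c Q.xi))‖ ≤ ‖c‖ * ‖y Q.xi‖ := by
  classical
  refine le_of_sq_le_sq ?_ (by positivity)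
  have hsum := Q.hasSum_norm_sqL τ.e (Q.tensorOp 1 y (Q.W (Q.tmul c Q.xi)))
  refine hasSum_le_of_sum_le hsum fun S => ?_
  simp only [adjL_W]
  set a : ι → B H := fun k => y * Q.toLCQG.w (τ.e k) c with ha
  have ham : ∀ k, a k ∈ Q.Mhat := fun k => mul_mem hy (Q.toLCQG.w_mem _ _)
  set T : ι → H2 := fun k => Q.tensorOp 1 (a k) ((star Q.W) (Q.tmul (τ.e k) Q.xi)) with hT
  set q : ℝ := ∑ k ∈ S, ‖y (Q.toLCQG.w (τ.e k) c Q.xi)‖ ^ 2 with hq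
  have hq0 : 0 ≤ q := Finset.sum_nonneg fun _ _ => by positivity
  have hak : ∀ k, Q.phihat (star (a k) * a k) =
      ((‖y (Q.toLCQG.w (τ.e k) c Q.xi)‖ ^ 2 : ℝ) : ℂ) := by
    intro k
    rw [← Q.inner_xi (ham k) (ham k), inner_self_eq]; rfl
  have hTT : ∀ k l, ⟪T k, T l⟫ = if k = l then Q.phihat (star (a k) * a k) else 0 := by
    intro k l
    have : ⟪T k, T l⟫ = ⟪(star Q.W) (Q.tmul (τ.e k) Q.xi),
        Q.tensorOp 1 (star (a k) * a l) ((star Q.W) (Q.tmul (τ.e l) Q.xi))⟫ := by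
      have e1 : Q.tensorOp 1 (star (a k) * a l) =
          star (Q.tensorOp 1 (a k)) * Q.tensorOp 1 (a l) := by
        rw [star_tensorOp, tensorOp_mul, star_one, one_mul]
      rw [e1, mul_apply_eq_comp, star_inner]
    rw [this, Q.step3 τ (mul_mem (star_mem (ham k)) (ham l)),
      orthonormal_iff_ite.1 τ.e.orthonormal]
    split_ifs with h
    · rw [h, one_mul]
    · rw [zero_mul]
  have hnorm : ‖∑ k ∈ S, T k‖ ^ 2 = q := by
    have : ⟪∑ k ∈ S, T k, ∑ k ∈ S, T k⟫ = (q : ℂ) := by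
      simp only [sum_inner, inner_sum, hTT]
      rw [hq, Complex.ofReal_sum]
      refine Finset.sum_congr rfl fun k hk => ?_
      rw [Finset.sum_ite_eq', if_pos hk, hak]
    rw [inner_self_eq] at this
    exact_mod_cast this
  have hinner : ⟪Q.tmul c (y Q.xi), ∑ k ∈ S, T k⟫ = (q : ℂ) := by
    rw [inner_sum, hq, Complex.ofReal_sum]
    refine Finset.sum_congr rfl fun k _ => ?_
    have h1 : ⟪Q.tmul c (y Q.xi), T k⟫ = ⟪y Q.xi, (a k * star (Q.toLCQG.w (τ.e k) c)) Q.xi⟫ := by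
      have := Q.toLCQG.slL_mul_left (star Q.W) (a k) c (τ.e k)
      rw [w, star_slL, ← this, inner_slL]
      rfl
    have hw := Q.toLCQG.w_mem (τ.e k) c
    rw [h1, Q.inner_xi hy (mul_mem (ham k) (star_mem hw)), ← hak, ← mul_assoc,
      Q.phihat_tracial _ (mul_mem (star_mem hy) (ham k)) _ (star_mem hw), ← mul_assoc, ha]
    simp only [star_mul]
  have hle : q ≤ ‖c‖ * ‖y Q.xi‖ * ‖∑ k ∈ S, T k‖ := by
    have := norm_inner_le_norm (𝕜 := ℂ) (Q.tmul c (y Q.xi)) (∑ k ∈ S, T k)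
    rw [hinner, Q.toLCQG.norm_tmul, Complex.norm_real, Real.norm_of_nonneg hq0] at this
    exact this
  rw [← hnorm] at hle ⊢
  set n := ‖∑ k ∈ S, T k‖
  have hn : 0 ≤ n := norm_nonneg _
  rcases hn.eq_or_lt with h0 | h0
  · rw [← h0, zero_pow two_ne_zero]; positivity
  · have : n ≤ ‖c‖ * ‖y Q.xi‖ := by
      rw [pow_two] at hle
      exact le_of_mul_le_mul_right hle h0
    exact pow_le_pow_left₀ hn this 2

end DiscreteKacQG

end Bounds


section Equality

set_option linter.unusedSectionVars false

variable {H H2}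

open LCQG ContinuousLinearMap

theorem eq_zero_of_quad (β : ℂ) (γ : ℝ) (h : ∀ t : ℂ, 0 ≤ 2 * (t * β).re + ‖t‖ ^ 2 * γ) :
    β = 0 := by
  by_contra hb
  have hpos : 0 < ‖β‖ ^ 2 := by positivity
  set s : ℝ := 1 / (|γ| + 1) with hs
  have hs0 : 0 < s := by positivity
  have h1 := h (-(s : ℂ) * (starRingEnd ℂ) β)
  have e1 : (-(s : ℂ) * (starRingEnd ℂ) β * β).re = -(s * ‖β‖ ^ 2) := by
    rw [mul_assoc, Complex.conj_mul']
    rw [← Complex.ofReal_pow, ← Complex.ofReal_neg, ← Complex.ofReal_mul, Complex.ofReal_re]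
    ring
  have e2 : ‖-(s : ℂ) * (starRingEnd ℂ) β‖ ^ 2 = s ^ 2 * ‖β‖ ^ 2 := by
    rw [norm_mul, norm_neg, Complex.norm_real, Real.norm_of_nonneg hs0.le, RCLike.norm_conj,
      mul_pow]
  rw [e1, e2] at h1
  have h2 : s * |γ| < 1 := by
    rw [hs, one_div, inv_mul_lt_iff₀ (by positivity)]
    linarith
  have h3 : s * γ ≤ s * |γ| := by gcongr; exact le_abs_self γ
  have h4 : 0 < s * ‖β‖ ^ 2 := by positivity
  have h5 : s * ‖β‖ ^ 2 * (s * γ) ≤ s * ‖β‖ ^ 2 * 1 := by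
    gcongr; linarith
  nlinarith

theorem norm_add_smul_sq (v u : H) (t : ℂ) :
    ‖v + t • u‖ ^ 2 = ‖v‖ ^ 2 + 2 * (t * ⟪v, u⟫).re + ‖t‖ ^ 2 * ‖u‖ ^ 2 := by
  rw [norm_add_sq (𝕜 := ℂ), inner_smul_right, norm_smul, mul_pow]
  rfl

namespace DiscreteKacQG

variable (Q : DiscreteKacQG H H2) {ι K : Type*} [NormedAddCommGroup K] [InnerProductSpace ℂ K]
  [CompleteSpace K]

theorem step9 (τ : Tri Q.toLCQG ι K) {z : B H} (hz : z ∈ Q.Mhat) (c : H) :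
    ⟪Q.W (Q.tmul c Q.xi), Q.tensorOp 1 z (Q.W (Q.tmul c Q.xi))⟫ =
      ((‖c‖ ^ 2 : ℝ) : ℂ) * Q.phihat z := by
  set v := Q.W (Q.tmul c Q.xi) with hv
  have hvn : ‖v‖ = ‖c‖ := by rw [hv, Q.W_norm, Q.toLCQG.norm_tmul, Q.norm_xi, mul_one]
  have hphi : ⟪Q.xi, z Q.xi⟫ = Q.phihat z := by
    have := Q.inner_xi (one_mem _) hz
    simpa using this
  set β : ℂ := ((‖c‖ ^ 2 : ℝ) : ℂ) * Q.phihat z - ⟪v, Q.tensorOp 1 z v⟫ with hβ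
  suffices β = 0 by rw [hβ] at this; exact (sub_eq_zero.1 this).symm
  refine eq_zero_of_quad β (‖c‖ ^ 2 * ‖z Q.xi‖ ^ 2 - ‖Q.tensorOp 1 z v‖ ^ 2) fun t => ?_
  have hm : (1 + t • z : B H) ∈ Q.Mhat := add_mem (one_mem _) (Q.Mhat.toStarSubalgebra.smul_mem hz t)
  have h := Q.step4 τ hm c
  have e1 : Q.tensorOp 1 (1 + t • z) v = v + t • Q.tensorOp 1 z v := by
    rw [map_add, map_smul, tensorOp_one, add_apply, one_apply_eq_self, smul_apply]
  have e2 : (1 + t • z) Q.xi = Q.xi + t • z Q.xi := by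
    rw [add_apply, one_apply_eq_self, smul_apply]
  rw [← hv, e1, e2] at h
  have h' := pow_le_pow_left₀ (norm_nonneg _) h 2
  rw [mul_pow, norm_add_smul_sq, norm_add_smul_sq, hvn, Q.norm_xi, hphi] at h'
  have e3 : (t * β).re = ‖c‖ ^ 2 * (t * Q.phihat z).re - (t * ⟪v, Q.tensorOp 1 z v⟫).re := by
    rw [hβ, mul_sub, Complex.sub_re, mul_left_comm, Complex.re_ofReal_mul]
  rw [e3]
  nlinarith

end DiscreteKacQG

end Equality


section CondExp

set_option linter.unusedSectionVars false

variable {H H2}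

open LCQG ContinuousLinearMap

/-- selfadjoint bound: `x + ‖x‖ ≥ 0` and `‖x‖ - x ≥ 0` -/
theorem sa_bounds {x : B H} (hx : IsSelfAdjoint x) :
    0 ≤ x + ((‖x‖ : ℝ) : ℂ) • (1 : B H) ∧ 0 ≤ ((‖x‖ : ℝ) : ℂ) • (1 : B H) - x := by
  have e : ((‖x‖ : ℝ) : ℂ) • (1 : B H) = algebraMap ℝ (B H) ‖x‖ := by
    rw [Algebra.algebraMap_eq_smul_one, Complex.coe_smul]
  rw [e]
  constructor
  · have := IsSelfAdjoint.neg_algebraMap_norm_le_self hx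
    rw [← sub_nonneg, sub_neg_eq_add] at this
    exact this
  · exact sub_nonneg.2 (IsSelfAdjoint.le_algebraMap_norm_self hx)

theorem norm_one_le' : ‖(1 : B H)‖ ≤ 1 := ContinuousLinearMap.norm_id_le

theorem norm_le_of_le_scalar {x : B H} {r : ℝ} (hr : 0 ≤ r) (h0 : 0 ≤ x)
    (h : 0 ≤ (r : ℂ) • (1 : B H) - x) : ‖x‖ ≤ r := by
  have e : (r : ℂ) • (1 : B H) = algebraMap ℝ (B H) r := by
    rw [Algebra.algebraMap_eq_smul_one, Complex.coe_smul]
  rw [e] at h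
  exact (CStarAlgebra.norm_le_iff_le_algebraMap x hr h0).2 (sub_nonneg.1 h)

theorem pos_unital_bound (P : B H →ₗ[ℂ] B H) (h1 : P 1 = 1) (hp : ∀ x, 0 ≤ x → 0 ≤ P x)
    (x : B H) : ‖P x‖ ≤ 6 * ‖x‖ := by
  have hpos : ∀ y : B H, 0 ≤ y → ‖P y‖ ≤ ‖y‖ := by
    intro y hy
    refine norm_le_of_le_scalar (norm_nonneg _) (hp y hy) ?_
    have := hp _ (sa_bounds (IsSelfAdjoint.of_nonneg hy)).2
    rwa [map_sub, map_smul, h1] at this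
  have hn1 : ∀ r : ℝ, 0 ≤ r → ‖(r : ℂ) • (1 : B H)‖ ≤ r := by
    intro r hr
    rw [norm_smul, Complex.norm_real, Real.norm_of_nonneg hr]
    nlinarith [norm_one_le' (H := H), norm_nonneg (1 : B H)]
  have hsa : ∀ y : B H, IsSelfAdjoint y → ‖P y‖ ≤ 3 * ‖y‖ := by
    intro y hy
    have h2 := hpos _ (sa_bounds hy).1
    have h3 : P y = P (y + ((‖y‖ : ℝ) : ℂ) • (1 : B H)) - ((‖y‖ : ℝ) : ℂ) • (1 : B H) := by
      rw [map_add, map_smul, h1, add_sub_cancel_right]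
    have h4 := hn1 ‖y‖ (norm_nonneg _)
    have h5 := norm_add_le y (((‖y‖ : ℝ) : ℂ) • (1 : B H))
    have h6 := norm_sub_le (P (y + ((‖y‖ : ℝ) : ℂ) • (1 : B H))) (((‖y‖ : ℝ) : ℂ) • (1 : B H))
    rw [← h3] at h6
    linarith
  have hx := realPart_add_I_smul_imaginaryPart x
  have hr := hsa (realPart x : B H) (realPart x).2
  have hi := hsa (imaginaryPart x : B H) (imaginaryPart x).2
  have hr' : ‖(realPart x : B H)‖ ≤ ‖x‖ := realPart.norm_le x
  have hi' : ‖(imaginaryPart x : B H)‖ ≤ ‖x‖ := imaginaryPart.norm_le x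
  have : P x = P (realPart x : B H) + Complex.I • P (imaginaryPart x : B H) := by
    rw [← map_smul, ← map_add, hx]
  rw [this]
  refine (norm_add_le _ _).trans ?_
  rw [norm_smul, Complex.norm_I, one_mul]
  linarith

/-- one-parameter group -/
def ex (a : B H) (z : ℂ) : B H := NormedSpace.exp (z • a)

theorem ex_zero (a : B H) : ex a 0 = 1 := by
  rw [ex, zero_smul, NormedSpace.exp_zero]

theorem ex_add (a : B H) (z w : ℂ) : ex a (z + w) = ex a z * ex a w := by
  let _ : NormedAlgebra ℚ (B H) := NormedAlgebra.restrictScalars ℚ ℂ (B H)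
  rw [ex, add_smul]
  exact NormedSpace.exp_add_of_commute (((Commute.refl a).smul_left z).smul_right w)

theorem ex_neg_mul (a : B H) (z : ℂ) : ex a (-z) * ex a z = 1 := by
  rw [← ex_add, neg_add_cancel, ex_zero]

theorem ex_mul_neg (a : B H) (z : ℂ) : ex a z * ex a (-z) = 1 := by
  rw [← ex_add, add_neg_cancel, ex_zero]

theorem star_ex {a : B H} (ha : IsSelfAdjoint a) (z : ℂ) :
    star (ex a z) = ex a (star z) := by
  rw [ex, NormedSpace.star_exp, star_smul, ha.star_eq, ex]

theorem ex_deriv (a : B H) (z : ℂ) : HasDerivAt (ex a) (ex a z * a) z :=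
  hasDerivAt_exp_smul_const a z

theorem ex_mem {N : VonNeumannAlgebra H} {a : B H} (ha : a ∈ N) (z : ℂ) : ex a z ∈ N := by
  refine mem_of_commute fun b hb => ?_
  exact (Commute.exp_right ((commute_of_mem ha hb).symm.smul_right z)).symm

theorem ex_norm_I {a : B H} (ha : IsSelfAdjoint a) (s : ℝ) :
    ‖ex a (s * Complex.I)‖ ≤ 1 := by
  have h : star (ex a (s * Complex.I)) * ex a (s * Complex.I) = 1 := by
    rw [star_ex ha]
    have : star ((s : ℂ) * Complex.I) = -(s * Complex.I) := by
      simp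
    rw [this, ex_neg_mul]
  have h2 := CStarRing.norm_star_mul_self (x := ex a (s * Complex.I))
  rw [h] at h2
  have h3 := norm_one_le' (H := H)
  nlinarith [norm_nonneg (ex a (s * Complex.I))]

theorem E_nonneg {N : VonNeumannAlgebra H} {E : B H →ₗ[ℂ] B H}
    (hE : IsConditionalExpectation H N E) {x : B H} (hx : 0 ≤ x) : 0 ≤ E x :=
  (nonneg_iff_isPositive _).2 (hE.positive x ((nonneg_iff_isPositive _).1 hx))

theorem E_bound {N : VonNeumannAlgebra H} {E : B H →ₗ[ℂ] B H}
    (hE : IsConditionalExpectation H N E) (x : B H) : ‖E x‖ ≤ 6 * ‖x‖ :=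
  pos_unital_bound E hE.unital (fun _ h => E_nonneg hE h) x

/-- `E` as a continuous map -/
def Ec {N : VonNeumannAlgebra H} {E : B H →ₗ[ℂ] B H}
    (hE : IsConditionalExpectation H N E) : B H →L[ℂ] B H :=
  E.mkContinuous 6 (E_bound hE)

theorem E_ex {N : VonNeumannAlgebra H} {E : B H →ₗ[ℂ] B H}
    (hE : IsConditionalExpectation H N E) {a : B H} (ha : a ∈ N) (hs : IsSelfAdjoint a)
    (x : B H) (z : ℂ) :
    ex a (-z) * E (ex a z * x * ex a z) * ex a (-z) = E x := by
  set F : ℂ → B H := fun z => ex a (-z) * Ec hE (ex a z * x * ex a z) * ex a (-z) with hF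
  have hd : Differentiable ℂ F := by
    have h1 : Differentiable ℂ (ex a) := fun z => (ex_deriv a z).differentiableAt
    have h2 : Differentiable ℂ (fun z => ex a (-z)) := h1.comp differentiable_neg
    have h3 : Differentiable ℂ (fun z => ex a z * x * ex a z) :=
      (h1.mul (differentiable_const x)).mul h1
    have h4 : Differentiable ℂ (fun z => Ec hE (ex a z * x * ex a z)) :=
      (Ec hE).differentiable.comp h3
    exact (h2.mul h4).mul h2
  have hb : Bornology.IsBounded (Set.range F) := by
    refine isBounded_iff_forall_norm_le.2 ⟨6 * ‖x‖, ?_⟩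
    rintro _ ⟨z, rfl⟩
    set t : ℝ := z.re
    set s : ℝ := z.im
    set g := ex a (t : ℂ) with hg
    set g' := ex a (-(t : ℂ)) with hg'
    set u := ex a ((s : ℂ) * Complex.I) with hu
    set u' := ex a (((-s : ℝ) : ℂ) * Complex.I) with hu'
    have hgg : g' * g = 1 := ex_neg_mul a _
    have hgg2 : g * g' = 1 := ex_mul_neg a _
    have hgs : IsSelfAdjoint g := by
      rw [IsSelfAdjoint, hg, star_ex hs]; simp
    have hgs' : IsSelfAdjoint g' := by
      rw [IsSelfAdjoint, hg', star_ex hs]; simp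
    have hz1 : ex a z = g * u := by
      rw [hg, hu, ← ex_add, Complex.re_add_im]
    have hz1' : ex a z = u * g := by
      rw [hg, hu, ← ex_add, add_comm, Complex.re_add_im]
    have hzn : -z = -(t : ℂ) + ((-s : ℝ) : ℂ) * Complex.I := by
      rw [← Complex.re_add_im z]; push_cast; ring
    have hz2 : ex a (-z) = g' * u' := by
      rw [hg', hu', ← ex_add, ← hzn]
    have hz2' : ex a (-z) = u' * g' := by
      rw [hg', hu', ← ex_add, add_comm, ← hzn]
    let P : B H →ₗ[ℂ] B H :=
      { toFun := fun y => g' * E (g * y * g) * g'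
        map_add' := fun y y' => by simp only [mul_add, add_mul, map_add]
        map_smul' := fun c y => by
          simp only [mul_smul_comm, smul_mul_assoc, map_smul, RingHom.id_apply] }
    have hP : ∀ y, P y = g' * E (g * y * g) * g' := fun _ => rfl
    have hP1 : P 1 = 1 := by
      have hgm : g ∈ N := ex_mem ha _
      rw [hP, mul_one, hE.fixes _ (mul_mem hgm hgm), ← mul_assoc, hgg, one_mul, hgg2]
    have hPp : ∀ y, 0 ≤ y → 0 ≤ P y := fun y hy =>
      IsSelfAdjoint.conjugate_nonneg (E_nonneg hE (IsSelfAdjoint.conjugate_nonneg hy hgs)) hgs'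
    have hFz : F z = u' * P (u * x * u) * u' := by
      change ex a (-z) * E (ex a z * x * ex a z) * ex a (-z) = _
      rw [hP]
      conv_lhs => rw [show ex a z * x * ex a z = g * u * x * (u * g) by
        nth_rewrite 1 [hz1]; rw [hz1'], show ex a (-z) * E (g * u * x * (u * g)) * ex a (-z) =
        u' * g' * E (g * u * x * (u * g)) * (g' * u') by nth_rewrite 1 [hz2']; rw [hz2]]
      simp only [mul_assoc]
    rw [hFz]
    have hun : ‖u‖ ≤ 1 := ex_norm_I hs s
    have hun' : ‖u'‖ ≤ 1 := ex_norm_I hs (-s)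
    have hc : ∀ (v y : B H), ‖v‖ ≤ 1 → ‖v * y * v‖ ≤ ‖y‖ := by
      intro v y hv
      calc ‖v * y * v‖ ≤ ‖v‖ * ‖y‖ * ‖v‖ :=
            (norm_mul_le _ _).trans (by gcongr; exact norm_mul_le _ _)
        _ ≤ 1 * ‖y‖ * 1 := by gcongr
        _ = ‖y‖ := by ring
    calc ‖u' * P (u * x * u) * u'‖ ≤ ‖P (u * x * u)‖ := hc _ _ hun'
      _ ≤ 6 * ‖u * x * u‖ := pos_unital_bound P hP1 hPp _
      _ ≤ 6 * ‖x‖ := by gcongr; exact hc _ _ hun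
  have h := hd.apply_eq_apply_of_bounded hb z 0
  have h0 : F 0 = E x := by
    change ex a (-0) * E (ex a 0 * x * ex a 0) * ex a (-0) = E x
    rw [neg_zero, ex_zero]; simp
  rw [h0] at h
  exact h

theorem E_jordan_sa {N : VonNeumannAlgebra H} {E : B H →ₗ[ℂ] B H}
    (hE : IsConditionalExpectation H N E) {a : B H} (ha : a ∈ N) (hs : IsSelfAdjoint a)
    (x : B H) : E (a * x + x * a) = a * E x + E x * a := by
  have h : ∀ z, Ec hE (ex a z * x * ex a z) = ex a z * E x * ex a z := by
    intro z
    rw [← E_ex hE ha hs x z]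
    have : ex a z * (ex a (-z) * E (ex a z * x * ex a z) * ex a (-z)) * ex a z =
      (ex a z * ex a (-z)) * E (ex a z * x * ex a z) * (ex a (-z) * ex a z) := by
      simp only [mul_assoc]
    rw [this, ex_neg_mul, ex_mul_neg, one_mul, mul_one]
    rfl
  have hx : ∀ y : B H, HasDerivAt (fun z => ex a z * y * ex a z) (a * y + y * a) 0 := by
    intro y
    have h1 := ex_deriv a 0
    have h2 := (h1.mul_const y).mul h1
    simp only [ex_zero, one_mul, mul_one] at h2
    exact h2
  have h1 := (Ec hE).hasFDerivAt.comp_hasDerivAt (0 : ℂ) (hx x)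
  have h2 : HasDerivAt (Ec hE ∘ fun z => ex a z * x * ex a z) (a * E x + E x * a) 0 := by
    have : (Ec hE ∘ fun z => ex a z * x * ex a z) = fun z => ex a z * E x * ex a z := funext h
    rw [this]
    exact hx (E x)
  exact h1.unique h2

theorem E_jordan {N : VonNeumannAlgebra H} {E : B H →ₗ[ℂ] B H}
    (hE : IsConditionalExpectation H N E) {a : B H} (ha : a ∈ N)
    (x : B H) : E (a * x + x * a) = a * E x + E x * a := by
  have hx := realPart_add_I_smul_imaginaryPart a
  have hr : (realPart a : B H) ∈ N := by
    rw [realPart_apply_coe]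
    exact N.toStarSubalgebra.smul_mem (add_mem ha (star_mem ha)) ((2⁻¹ : ℝ) : ℂ)
  have hi : (imaginaryPart a : B H) ∈ N := by
    rw [imaginaryPart_apply_coe]
    exact N.toStarSubalgebra.smul_mem
      (N.toStarSubalgebra.smul_mem (sub_mem ha (star_mem ha)) ((2⁻¹ : ℝ) : ℂ)) (-Complex.I)
  have h1 := E_jordan_sa hE hr (realPart a).2 x
  have h2 := E_jordan_sa hE hi (imaginaryPart a).2 x
  rw [← hx]
  set p := (realPart a : B H)
  set q := (imaginaryPart a : B H)
  have e : (p + Complex.I • q) * x + x * (p + Complex.I • q) =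
      (p * x + x * p) + Complex.I • (q * x + x * q) := by
    simp only [add_mul, mul_add, smul_mul_assoc, mul_smul_comm, smul_add]; abel
  rw [e, map_add, map_smul, h1, h2]
  simp only [add_mul, mul_add, smul_mul_assoc, mul_smul_comm, smul_add]; abel

theorem E_jordan2 {N : VonNeumannAlgebra H} {E : B H →ₗ[ℂ] B H}
    (hE : IsConditionalExpectation H N E) {a b : B H} (ha : a ∈ N) (hb : b ∈ N)
    (x : B H) : E (a * x * b + b * x * a) = a * E x * b + b * E x * a := by
  have h1 := E_jordan hE ha (b * x + x * b)
  have h2 := E_jordan hE hb (a * x + x * a)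
  have h3 := E_jordan hE (add_mem (mul_mem ha hb) (mul_mem hb ha)) x
  rw [E_jordan hE hb x] at h1
  rw [E_jordan hE ha x] at h2
  have e : ∀ y : B H, (a * (b * y + y * b) + (b * y + y * b) * a) +
      (b * (a * y + y * a) + (a * y + y * a) * b) -
      ((a * b + b * a) * y + y * (a * b + b * a)) = (2 : ℂ) • (a * y * b + b * y * a) := by
    intro y
    rw [two_smul]
    noncomm_ring
  have h4 := congrArg E (e x)
  rw [map_sub, map_add, h1, h2, h3, e, map_smul] at h4
  exact (smul_right_injective (B H) (two_ne_zero' ℂ) h4).symm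

end CondExp


section Final

set_option linter.unusedSectionVars false

variable {H H2}

open LCQG ContinuousLinearMap Filter Topology

theorem re_mem {N : VonNeumannAlgebra H} {a : B H} (ha : a ∈ N) : (realPart a : B H) ∈ N := by
  rw [realPart_apply_coe]
  exact N.toStarSubalgebra.smul_mem (add_mem ha (star_mem ha)) ((2⁻¹ : ℝ) : ℂ)

theorem im_mem {N : VonNeumannAlgebra H} {a : B H} (ha : a ∈ N) :
    (imaginaryPart a : B H) ∈ N := by
  rw [imaginaryPart_apply_coe]
  exact N.toStarSubalgebra.smul_mem
    (N.toStarSubalgebra.smul_mem (sub_mem ha (star_mem ha)) ((2⁻¹ : ℝ) : ℂ)) (-Complex.I)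

theorem nonneg_of_inner {T : B H} (h : ∀ p, 0 ≤ ⟪p, T p⟫) : 0 ≤ T := by
  rw [nonneg_iff_isPositive, ← isPositive_toLinearMap_iff, LinearMap.isPositive_iff_complex]
  intro p
  have h1 := h p
  rw [Complex.nonneg_iff] at h1
  have h2 : ⟪T p, p⟫ = ⟪p, T p⟫ := by
    rw [← inner_conj_symm, Complex.conj_eq_iff_im]
    exact h1.2.symm
  change ((⟪T p, p⟫ : ℂ).re : ℂ) = ⟪T p, p⟫ ∧ 0 ≤ (⟪T p, p⟫ : ℂ).re
  rw [h2]
  exact ⟨Complex.ext (by simp) (by simpa using h1.2), h1.1⟩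

theorem inner_of_nonneg {T : B H} (h : 0 ≤ T) (p : H) : 0 ≤ ⟪p, T p⟫ :=
  ((nonneg_iff_isPositive _).1 h).inner_nonneg_right p

theorem const_of_affine (g : ℕ → ℂ) (C : ℝ) (hb : ∀ n, ‖g n‖ ≤ C)
    (h : ∀ n, g (n + 2) + g n = 2 * g (n + 1)) : g 1 = g 0 := by
  have hn : ∀ n : ℕ, g n = g 0 + n * (g 1 - g 0) ∧ g (n + 1) = g 0 + (n + 1) * (g 1 - g 0) := by
    intro n
    induction n with
    | zero => simp
    | succ k ih =>
      refine ⟨by rw [ih.2]; push_cast; ring, ?_⟩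
      have := h k
      rw [ih.1, ih.2] at this
      push_cast
      linear_combination this
  by_contra hne
  have hpos : 0 < ‖g 1 - g 0‖ := norm_pos_iff.2 (sub_ne_zero.2 hne)
  obtain ⟨n, hlt⟩ := exists_nat_gt (2 * C / ‖g 1 - g 0‖)
  rw [div_lt_iff₀ hpos] at hlt
  have h1 : (n : ℂ) * (g 1 - g 0) = g n - g 0 := by rw [(hn n).1]; ring
  have h2 : ‖(n : ℂ) * (g 1 - g 0)‖ ≤ 2 * C := by
    rw [h1]
    exact (norm_sub_le _ _).trans (by linarith [hb n, hb 0])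
  rw [norm_mul, Complex.norm_natCast] at h2
  linarith

namespace DiscreteKacQG

variable (Q : DiscreteKacQG H H2) {ι K : Type*} [NormedAddCommGroup K] [InnerProductSpace ℂ K]
  [CompleteSpace K] {E : B H →ₗ[ℂ] B H}

theorem psi_bound (hE : IsConditionalExpectation H Q.Mhat E) (x : B H) :
    ‖Q.phihat (E x)‖ ≤ 6 * ‖x‖ := by
  rw [← Q.TV_xi _ (hE.mem_range x)]
  refine (norm_inner_le_norm _ _).trans ?_
  rw [Q.norm_xi, one_mul]
  refine (le_opNorm _ _).trans ?_
  rw [Q.norm_xi, mul_one]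
  exact E_bound hE x

theorem psi_nonneg (hE : IsConditionalExpectation H Q.Mhat E) {x : B H} (hx : 0 ≤ x) :
    0 ≤ Q.phihat (E x) :=
  Q.phihat_state.2 _ (hE.mem_range x) (hE.positive x ((nonneg_iff_isPositive _).1 hx))

theorem psi_unitary (hE : IsConditionalExpectation H Q.Mhat E) {u : B H} (hu : u ∈ Q.Mhat)
    (h1 : star u * u = 1) (h2 : u * star u = 1) (x : B H) :
    Q.phihat (E (star u * x * u)) = Q.phihat (E x) := by
  have hus := star_mem hu
  have hn : ‖u‖ ≤ 1 := by
    have h := CStarRing.norm_star_mul_self (x := u)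
    rw [h1] at h
    nlinarith [norm_nonneg u, norm_one_le' (H := H)]
  set X : ℕ → B H := fun n => star u ^ n * x * u ^ n with hX
  have hXs : ∀ n, X (n + 1) = star u * X n * u := by
    intro n
    simp only [hX, pow_succ' (star u), pow_succ u, mul_assoc]
  have hXn : ∀ n, ‖X n‖ ≤ ‖x‖ := by
    intro n
    induction n with
    | zero => simp [hX]
    | succ k ih =>
      rw [hXs]
      calc ‖star u * X k * u‖ ≤ ‖star u‖ * ‖X k‖ * ‖u‖ :=
            (norm_mul_le _ _).trans (by gcongr; exact norm_mul_le _ _)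
        _ ≤ 1 * ‖x‖ * 1 := by rw [norm_star]; gcongr
        _ = ‖x‖ := by ring
  have h := const_of_affine (fun n => Q.phihat (E (X n))) (6 * ‖x‖)
    (fun n => (Q.psi_bound hE _).trans (by gcongr; exact hXn n)) (fun n => by
      have hj := E_jordan2 hE hus hu (X (n + 1))
      have e1 : u * X (n + 1) * star u = X n := by
        rw [hXs]
        calc u * (star u * X n * u) * star u = (u * star u) * X n * (u * star u) := by
              simp only [mul_assoc]
          _ = X n := by rw [h2, one_mul, mul_one]
      rw [e1, ← hXs, map_add] at hj
      have hm := hE.mem_range (X (n + 1))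
      have := congrArg Q.phihat hj
      rw [map_add, map_add, Q.phihat_tracial _ (mul_mem hus hm) _ hu, ← mul_assoc, h2, one_mul,
        Q.phihat_tracial _ (mul_mem hu hm) _ hus, ← mul_assoc, h1, one_mul] at this
      change Q.phihat (E (X (n + 2))) + Q.phihat (E (X n)) = _
      rw [this, two_mul])
  simpa [hX] using h

theorem psi_comm_unitary (hE : IsConditionalExpectation H Q.Mhat E) {u : B H} (hu : u ∈ Q.Mhat)
    (h1 : star u * u = 1) (h2 : u * star u = 1) (x : B H) :
    Q.phihat (E (u * x)) = Q.phihat (E (x * u)) := by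
  rw [← Q.psi_unitary hE hu h1 h2 (u * x), ← mul_assoc, h1, one_mul]

/-- `φ̂ ∘ E` as a continuous functional -/
def psi (hE : IsConditionalExpectation H Q.Mhat E) : B H →L[ℂ] ℂ :=
  (Q.phihat ∘ₗ E).mkContinuous 6 (Q.psi_bound hE)

theorem psi_comm_sa (hE : IsConditionalExpectation H Q.Mhat E) {a : B H} (ha : a ∈ Q.Mhat)
    (hs : IsSelfAdjoint a) (x : B H) : Q.phihat (E (a * x)) = Q.phihat (E (x * a)) := by
  set b : B H := Complex.I • a with hb
  have hbm : b ∈ Q.Mhat := Q.Mhat.toStarSubalgebra.smul_mem ha _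
  have hbs : star b = -b := by
    rw [hb, star_smul, hs.star_eq]; simp
  have hstar : ∀ s : ℝ, star (ex b (s : ℂ)) = ex b (-(s : ℂ)) := by
    intro s
    rw [ex, NormedSpace.star_exp, star_smul, hbs, ex]; simp
  have hz : ∀ s : ℝ, Q.psi hE (ex b (s : ℂ) * x - x * ex b (s : ℂ)) = 0 := by
    intro s
    have := Q.psi_comm_unitary hE (ex_mem hbm (s : ℂ)) (by rw [hstar, ex_neg_mul])
      (by rw [hstar, ex_mul_neg]) x
    rw [map_sub]
    exact sub_eq_zero.2 this
  have hd : HasDerivAt (fun z : ℂ => Q.psi hE (ex b z * x - x * ex b z))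
      (Q.psi hE (b * x - x * b)) ((0 : ℝ) : ℂ) := by
    have h1 := ex_deriv b ((0 : ℝ) : ℂ)
    have h2 := (h1.mul_const x).sub (h1.const_mul x)
    have h3 := (Q.psi hE).hasFDerivAt.comp_hasDerivAt ((0 : ℝ) : ℂ) h2
    simp only [Complex.ofReal_zero, ex_zero, one_mul] at h3 ⊢
    exact h3
  have hr := hd.comp_ofReal
  simp only [hz] at hr
  have h0 := hr.unique (hasDerivAt_const (0 : ℝ) (0 : ℂ))
  rw [hb, smul_mul_assoc, mul_smul_comm, ← smul_sub, map_smul, smul_eq_zero] at h0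
  have h4 := h0.resolve_left Complex.I_ne_zero
  rw [map_sub] at h4
  exact sub_eq_zero.1 h4

theorem psi_comm (hE : IsConditionalExpectation H Q.Mhat E) {a : B H} (ha : a ∈ Q.Mhat)
    (x : B H) : Q.phihat (E (a * x)) = Q.phihat (E (x * a)) := by
  have h1 := Q.psi_comm_sa hE (re_mem ha) (realPart a).2 x
  have h2 := Q.psi_comm_sa hE (im_mem ha) (imaginaryPart a).2 x
  rw [← realPart_add_I_smul_imaginaryPart a]
  simp only [add_mul, mul_add, smul_mul_assoc, mul_smul_comm, map_add, map_smul, h1, h2]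

theorem psi_mul (hE : IsConditionalExpectation H Q.Mhat E) {a : B H} (ha : a ∈ Q.Mhat)
    (x : B H) : Q.phihat (E (x * a)) = Q.phihat (E x * a) := by
  have h := congrArg Q.phihat (E_jordan hE ha x)
  rw [map_add, map_add, map_add, Q.psi_comm hE ha,
    Q.phihat_tracial _ ha _ (hE.mem_range x), ← two_mul, ← two_mul] at h
  exact mul_left_cancel₀ two_ne_zero h

theorem psi_conj (hE : IsConditionalExpectation H Q.Mhat E) {a : B H} (ha : a ∈ Q.Mhat)
    (x : B H) : Q.phihat (E (star a * x * a)) = Q.phihat (star a * E x * a) := by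
  have hs := star_mem ha
  rw [mul_assoc, Q.psi_comm hE hs, mul_assoc, Q.psi_mul hE (mul_mem ha hs), ← mul_assoc,
    Q.phihat_tracial _ (mul_mem (hE.mem_range x) ha) _ hs, ← mul_assoc]

theorem adjL_W' (y : B H) (d c p : H) :
    adjoint (Q.toLCQG.insL d) (Q.tensorOp 1 y (Q.W (Q.tmul c p))) =
      y (Q.toLCQG.w d c p) :=
  congrArg (fun T => T p) (Q.toLCQG.slL_mul_left Q.W y d c)

/-- `y ↦ (ω_{c,d} ⊗ id)Δ(y)` -/
def sc (d c : H) : B H →ₗ[ℂ] B H where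
  toFun y := Q.toLCQG.sliceL (vecFunctional H c d) (Q.toLCQG.Delta y)
  map_add' y y' := by simp only [LCQG.Delta, map_add, mul_add, add_mul]
  map_smul' t y := by
    simp only [LCQG.Delta, map_smul, mul_smul_comm, smul_mul_assoc, RingHom.id_apply]

theorem inner_sc (d c p q : H) (y : B H) :
    ⟪p, Q.sc d c y q⟫ = ⟪Q.W (Q.tmul d p), Q.tensorOp 1 y (Q.W (Q.tmul c q))⟫ := by
  change ⟪p, Q.toLCQG.sliceL (vecFunctional H c d) (Q.toLCQG.Delta y) q⟫ = _
  rw [sliceL_vec, inner_slL, LCQG.Delta, mul_apply_eq_comp, mul_apply_eq_comp, star_inner]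

/-- remainder map -/
def rem (e : HilbertBasis ι ℂ H) (c : H) (S : Finset ι) (y : B H) : B H :=
  Q.sc c c y - ∑ k ∈ S, star (Q.toLCQG.w (e k) c) * y * Q.toLCQG.w (e k) c

theorem rem_add (e : HilbertBasis ι ℂ H) (c : H) (S : Finset ι) (y y' : B H) :
    Q.rem e c S (y + y') = Q.rem e c S y + Q.rem e c S y' := by
  simp only [rem, map_add, mul_add, add_mul, Finset.sum_add_distrib]; abel

theorem rem_smul (e : HilbertBasis ι ℂ H) (c : H) (S : Finset ι) (t : ℂ) (y : B H) :
    Q.rem e c S (t • y) = t • Q.rem e c S y := by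
  simp only [rem, map_smul, mul_smul_comm, smul_mul_assoc, smul_sub, Finset.smul_sum]

theorem rem_nonneg (e : HilbertBasis ι ℂ H) (c : H) (S : Finset ι) {y : B H} (hy : 0 ≤ y) :
    0 ≤ Q.rem e c S y := by
  refine nonneg_of_inner fun p => ?_
  have h := Q.toLCQG.parsevalL e (Q.W (Q.tmul c p)) (Q.tensorOp 1 y (Q.W (Q.tmul c p)))
  have h1 : ∀ i, ⟪adjoint (Q.toLCQG.insL (e i)) (Q.W (Q.tmul c p)),
      adjoint (Q.toLCQG.insL (e i)) (Q.tensorOp 1 y (Q.W (Q.tmul c p)))⟫ =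
      ⟪Q.toLCQG.w (e i) c p, y (Q.toLCQG.w (e i) c p)⟫ := by
    intro i
    rw [adjL_W']
    rfl
  simp only [h1] at h
  rw [rem, sub_apply, inner_sub_right, Q.inner_sc, sub_nonneg, sum_apply, inner_sum]
  have h2 : ∀ k, ⟪p, (star (Q.toLCQG.w (e k) c) * y * Q.toLCQG.w (e k) c) p⟫ =
      ⟪Q.toLCQG.w (e k) c p, y (Q.toLCQG.w (e k) c p)⟫ := by
    intro k
    rw [mul_assoc, mul_apply_eq_comp, star_inner]
    rfl
  simp only [h2]
  exact sum_le_hasSum S (fun i _ => inner_of_nonneg hy _) h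

theorem rem_bound (hE : IsConditionalExpectation H Q.Mhat E) (e : HilbertBasis ι ℂ H) (c : H)
    (S : Finset ι) {x : B H} (hx : IsSelfAdjoint x) :
    ‖Q.phihat (E (Q.rem e c S x))‖ ≤ ‖x‖ * (Q.phihat (E (Q.rem e c S 1))).re := by
  have h1 := Q.psi_nonneg hE (Q.rem_nonneg e c S (sa_bounds hx).1)
  have h2 := Q.psi_nonneg hE (Q.rem_nonneg e c S (sa_bounds hx).2)
  have h3 := Q.psi_nonneg hE (Q.rem_nonneg e c S (zero_le_one (α := B H)))
  rw [sub_eq_add_neg, ← neg_one_smul ℂ x] at h2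
  simp only [rem_add, rem_smul, map_add, map_smul, smul_eq_mul] at h1 h2
  rw [Complex.nonneg_iff] at h1 h2 h3
  simp only [Complex.add_re, Complex.add_im, Complex.re_ofReal_mul, Complex.im_ofReal_mul,
    neg_one_mul, Complex.neg_re, Complex.neg_im] at h1 h2
  set r := Q.phihat (E (Q.rem e c S x))
  set q := Q.phihat (E (Q.rem e c S 1))
  have him : r.im = 0 := by
    have := h1.2
    rw [← h3.2] at this
    linarith
  have hr : r = (r.re : ℂ) := Complex.ext (by simp) (by simpa using him)
  rw [hr, Complex.norm_real, Real.norm_eq_abs, abs_le]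
  constructor <;> linarith [h1.1, h2.1]

theorem psi_rem (hE : IsConditionalExpectation H Q.Mhat E) (e : HilbertBasis ι ℂ H) (c : H)
    (S : Finset ι) (x : B H) :
    Q.phihat (E (Q.rem e c S x)) = Q.phihat (E (Q.sc c c x)) -
      ∑ k ∈ S, ⟪Q.toLCQG.w (e k) c Q.xi, E x (Q.toLCQG.w (e k) c Q.xi)⟫ := by
  rw [rem, map_sub, map_sub, map_sum, map_sum]
  congr 1
  refine Finset.sum_congr rfl fun k _ => ?_
  have hw := Q.toLCQG.w_mem (e k) c
  rw [Q.psi_conj hE hw, mul_assoc, ← Q.inner_xi hw (mul_mem (hE.mem_range x) hw)]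
  rfl

theorem hasSum_E (hE : IsConditionalExpectation H Q.Mhat E) (τ : Tri Q.toLCQG ι K) (c : H)
    (x : B H) :
    HasSum (fun k => ⟪Q.toLCQG.w (τ.e k) c Q.xi, E x (Q.toLCQG.w (τ.e k) c Q.xi)⟫)
      (((‖c‖ ^ 2 : ℝ) : ℂ) * Q.phihat (E x)) := by
  have h := Q.toLCQG.parsevalL τ.e (Q.W (Q.tmul c Q.xi))
    (Q.tensorOp 1 (E x) (Q.W (Q.tmul c Q.xi)))
  rw [Q.step9 τ (hE.mem_range x)] at h
  refine (congrArg (fun f => HasSum f _) (funext fun k => ?_)).mp h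
  rw [adjL_W']
  rfl

theorem sc_one (d c : H) : Q.sc d c 1 = ⟪d, c⟫ • 1 := by
  refine ext_B fun p q => ?_
  rw [Q.inner_sc, tensorOp_one, one_apply_eq_self, ← star_inner, ← mul_apply_eq_comp,
    Q.W_unitary_l, one_apply_eq_self, Q.tmul_inner, smul_apply, inner_smul_right,
    one_apply_eq_self]

theorem psi_sc_diag_sa (hE : IsConditionalExpectation H Q.Mhat E) (τ : Tri Q.toLCQG ι K) (c : H)
    {x : B H} (hx : IsSelfAdjoint x) :
    Q.phihat (E (Q.sc c c x)) = ((‖c‖ ^ 2 : ℝ) : ℂ) * Q.phihat (E x) := by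
  have hlim : ∀ y : B H, Tendsto (fun S => Q.phihat (E (Q.rem τ.e c S y))) atTop
      (𝓝 (Q.phihat (E (Q.sc c c y)) - ((‖c‖ ^ 2 : ℝ) : ℂ) * Q.phihat (E y))) := by
    intro y
    simp only [Q.psi_rem hE]
    exact tendsto_const_nhds.sub (Q.hasSum_E hE τ c y)
  have h1 : Q.phihat (E (Q.sc c c 1)) - ((‖c‖ ^ 2 : ℝ) : ℂ) * Q.phihat (E 1) = 0 := by
    rw [Q.sc_one, map_smul, map_smul, hE.unital, Q.phihat_state.1, inner_self_eq, smul_eq_mul,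
      sub_self]
  have hl1 := hlim 1
  rw [h1] at hl1
  have hl2 : Tendsto (fun S => ‖x‖ * (Q.phihat (E (Q.rem τ.e c S 1))).re) atTop (𝓝 0) := by
    have := ((Complex.continuous_re.tendsto _).comp hl1).const_mul ‖x‖
    simpa using this
  have hl3 := squeeze_zero_norm (fun S => Q.rem_bound hE τ.e c S hx) hl2
  exact sub_eq_zero.1 (tendsto_nhds_unique (hlim x) hl3)

theorem psi_sc_diag (hE : IsConditionalExpectation H Q.Mhat E) (τ : Tri Q.toLCQG ι K) (c : H)
    (x : B H) :
    Q.phihat (E (Q.sc c c x)) = ((‖c‖ ^ 2 : ℝ) : ℂ) * Q.phihat (E x) := by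
  have h1 := Q.psi_sc_diag_sa hE τ c (realPart x).2
  have h2 := Q.psi_sc_diag_sa hE τ c (imaginaryPart x).2
  rw [← realPart_add_I_smul_imaginaryPart x]
  simp only [map_add, map_smul, h1, h2, smul_eq_mul]
  ring

theorem sc_add_left (d d' c : H) (x : B H) : Q.sc (d + d') c x = Q.sc d c x + Q.sc d' c x := by
  refine ext_B fun p q => ?_
  simp only [Q.inner_sc, add_apply, inner_add_right, map_add, inner_add_left,
    LinearMap.add_apply]

theorem sc_add_right (d c c' : H) (x : B H) : Q.sc d (c + c') x = Q.sc d c x + Q.sc d c' x := by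
  refine ext_B fun p q => ?_
  simp only [Q.inner_sc, add_apply, inner_add_right, map_add, LinearMap.add_apply]

theorem sc_smul_left (t : ℂ) (d c : H) (x : B H) :
    Q.sc (t • d) c x = (starRingEnd ℂ) t • Q.sc d c x := by
  refine ext_B fun p q => ?_
  simp only [Q.inner_sc, smul_apply, inner_smul_right, map_smul, inner_smul_left,
    LinearMap.smul_apply]

theorem sc_smul_right (t : ℂ) (d c : H) (x : B H) :
    Q.sc d (t • c) x = t • Q.sc d c x := by
  refine ext_B fun p q => ?_
  simp only [Q.inner_sc, smul_apply, inner_smul_right, map_smul, LinearMap.smul_apply]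

theorem psi_sc (hE : IsConditionalExpectation H Q.Mhat E) (τ : Tri Q.toLCQG ι K) (d c : H)
    (x : B H) : Q.phihat (E (Q.sc d c x)) = ⟪d, c⟫ * Q.phihat (E x) := by
  have hdiag : ∀ v : H, Q.phihat (E (Q.sc v v x)) = ⟪v, v⟫ * Q.phihat (E x) := by
    intro v
    rw [Q.psi_sc_diag hE τ, inner_self_eq]
  have h1 := hdiag (d + c)
  have h2 := hdiag (Complex.I • d + c)
  simp only [sc_add_left, sc_add_right, sc_smul_left, sc_smul_right, map_add, map_smul,
    inner_add_left, inner_add_right, inner_smul_left, inner_smul_right, hdiag, smul_eq_mul,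
    Complex.conj_I] at h1 h2
  have h3 : Complex.I * Complex.I = -1 := Complex.I_mul_I
  linear_combination (1 / 2 : ℂ) * h1 + (1 / 2 : ℂ) * Complex.I * h2 +
    (1 / 2 : ℂ) * (Q.phihat (E (Q.sc d c x)) + ⟪c, d⟫ * Q.phihat (E x) - ⟪d, c⟫ * Q.phihat (E x) -
      Q.phihat (E (Q.sc c d x))) * h3

end DiscreteKacQG

end Final


/-- Let `𝔾` be a discrete quantum group of Kac type with tracial dual Haar state `φ̂`, let
`E` be a conditional expectation of `B(L²(𝔾))` onto `L∞(𝔾̂)`, and set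
`m := φ̂ ∘ E|_{L∞(𝔾)}`.  For `x ∈ L∞(𝔾)`, `â, b̂ ∈ L∞(𝔾̂)` and
`ω := ω_{Λ_{φ̂}(â), Λ_{φ̂}(b̂)}` one has
`m((ω ⊗ id)Δ(x)) = (φ̂ ⊗ φ̂)(Δ̂(b̂*)(E(x) ⊗ 1)Δ̂(â)) = φ̂(E(x)) φ̂(â b̂*) = ω(1) m(x)`. -/
theorem mean_invariance_computation (Q : DiscreteKacQG H H2)
    (E : B H →ₗ[ℂ] B H) (hE : IsConditionalExpectation H Q.Mhat E)
    (x : B H) (hx : x ∈ Q.M)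
    (ahat : B H) (ha : ahat ∈ Q.Mhat) (bhat : B H) (hb : bhat ∈ Q.Mhat) :
    (Q.phihat ∘ₗ E)
        (Q.toLCQG.sliceL (vecFunctional H (Q.Lam ahat) (Q.Lam bhat)) (Q.toLCQG.Delta x)) =
      Q.toLCQG.funcTensor Q.phihat Q.phihat
        (Q.toLCQG.Deltahat (star bhat) * Q.tensorOp (E x) 1 * Q.toLCQG.Deltahat ahat)
    ∧ Q.toLCQG.funcTensor Q.phihat Q.phihat
        (Q.toLCQG.Deltahat (star bhat) * Q.tensorOp (E x) 1 * Q.toLCQG.Deltahat ahat) =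
      Q.phihat (E x) * Q.phihat (ahat * star bhat)
    ∧ Q.phihat (E x) * Q.phihat (ahat * star bhat) =
      vecFunctional H (Q.Lam ahat) (Q.Lam bhat) 1 * (Q.phihat ∘ₗ E) x := by
  obtain ⟨S, e, -⟩ := exists_hilbertBasis ℂ H
  have hs := star_mem hb
  have h2 := Q.second_eq ha hs (hE.mem_range x)
  have hin : ⟪Q.Lam bhat, Q.Lam ahat⟫ = Q.phihat (ahat * star bhat) := by
    rw [Q.Lam_inner _ hb _ ha, Q.phihat_tracial _ hs _ ha]
  refine ⟨?_, h2, ?_⟩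
  · rw [h2, ← hin, mul_comm]
    exact Q.psi_sc hE (mkTri Q.toLCQG e) (Q.Lam bhat) (Q.Lam ahat) x
  · rw [← hin, mul_comm]
    rfl

end LCQGNote
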